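/- arXiv:2211.15602 — 2 statements merged into one kernel-verified Lean document; each statement's English description precedes it below -/
import Mathlib

section
/- For all integers n ≥ 1 and k ≥ 2, every digraph G with n vertices and every vertex of outdegree exactly k satisfies N_1(G) ≤ 5·n²·k·α(k)^(n−1), where N_1(G) is the number of path-cycle subgraphs of the digraph obtained from G by replacing each multi-edge of multiplicity k by a single edge of multiplicity 1, and α(k) = (k − 1 + √((k−1)² + 4))/2. -/
open scoped Classical
open Finset

/-- Number of directed cycles in a finite directed multigraph on `Fin n`
specified by the edge-multiplicity function `G`: self-loops are cycles of
length 1, cycles of length `≥ 2` correspond to cyclic permutations, parallel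
edges give distinct cycles, and cycles are counted up to cyclic rotation. -/
noncomputable def cycleCount (n : ℕ) (G : Fin n → Fin n → ℕ) : ℕ :=
  (∑ v, G v v) +
  ∑ σ : Equiv.Perm (Fin n), if σ.IsCycle then ∏ v ∈ σ.support, G v (σ v) else 0

/-- Number of path-cycle subgraphs of a finite directed multigraph with
multiplicity function `G`: a path-cycle subgraph is given by a nonempty
vertex set `s` together with a successor map `f` on `s` (extended by the
identity off `s`) whose functional digraph on `s` is weakly connected and
has at most one source (vertex of indegree zero); parallel edges give
distinct path-cycles. -/
noncomputable def pathCycleCount {V : Type*} [Fintype V] [DecidableEq V]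
    (G : V → V → ℕ) : ℕ :=
  ∑ s : Finset V, ∑ f : V → V,
    if s.Nonempty ∧ (∀ v, v ∉ s → f v = v) ∧ (∀ v ∈ s, f v ∈ s) ∧
        (∀ u ∈ s, ∀ v ∈ s,
          Relation.ReflTransGen (fun a b => (a ∈ s ∧ f a = b) ∨ (b ∈ s ∧ f b = a)) u v) ∧
        (s.filter fun v => ∀ u ∈ s, f u ≠ v).card ≤ 1
    then ∏ v ∈ s, G v (f v) else 0

/-- `α(k) = (k - 1 + √((k-1)² + 4)) / 2`. -/
noncomputable def alphaK (k : ℕ) : ℝ :=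
  ((k : ℝ) - 1 + Real.sqrt (((k : ℝ) - 1) ^ 2 + 4)) / 2

/-- Multiplicity function of the digraph `G_{n,k}`: on vertices `Fin n`,
edges `(i, i+1 mod n)` have multiplicity `k - 1` and edges `(i, i+2 mod n)`
have multiplicity `1`. -/
def GnkMult (n k : ℕ) : Fin n → Fin n → ℕ := fun i j =>
  if (j.val + n - i.val) % n = 1 then k - 1
  else if (j.val + n - i.val) % n = 2 then 1
  else 0

/-- Multiplicity function of the digraph `G'_{n,k}`: on vertices `Fin n`,
edges `(i, i+1 mod n)` have multiplicity `1` and edges `(i, i+2 mod n)`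
have multiplicity `k - 1`. -/
def Gnk'Mult (n k : ℕ) : Fin n → Fin n → ℕ := fun i j =>
  if (j.val + n - i.val) % n = 1 then 1
  else if (j.val + n - i.val) % n = 2 then k - 1
  else 0

/-- Edge relation of the simple digraph `G_m`: `(i, j)` is an edge whenever
`j - i ≡ 1 (mod m)` or `j - i ≡ 2 (mod m)`. -/
def GmRel (m : ℕ) : Fin m → Fin m → Prop := fun i j =>
  (j.val + m - i.val) % m = 1 ∨ (j.val + m - i.val) % m = 2

/-- The sequence `S_m` with `S_0 = 1`, `S_1 = k - 1`,
`S_m = (k-1) S_{m-1} + S_{m-2}`. -/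
def Sseq (k : ℕ) : ℕ → ℕ
  | 0 => 1
  | 1 => k - 1
  | (m + 2) => (k - 1) * Sseq k (m + 1) + Sseq k m

/-- `F_k(n)`: the maximum number of directed cycles over all digraphs on `n`
vertices with every outdegree exactly `k` in which every multi-edge between
distinct vertices has multiplicity at most `k - 1`. -/
noncomputable def Fk (k n : ℕ) : ℕ :=
  sSup {c : ℕ | ∃ G : Fin n → Fin n → ℕ,
    (∀ v, (∑ u, G v u) = k) ∧ (∀ u v : Fin n, u ≠ v → G u v ≤ k - 1) ∧
    c = cycleCount n G}

/-- Weak connectivity (same connected component) in a directed multigraph. -/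
def MConn {n : ℕ} (G : Fin n → Fin n → ℕ) : Fin n → Fin n → Prop :=
  Relation.ReflTransGen (fun a b => 0 < G a b ∨ 0 < G b a)

/-- A deterministic Markov decision problem with state space `S`, action
space `A` (all actions available at every state), deterministic transition
function `T`, reward function `R` and discount factor `gamma ∈ [0, 1)`. -/
structure DMDP (S A : Type*) where
  T : S → A → S
  R : S → A → ℝ
  gamma : ℝ
  gamma_nonneg : 0 ≤ gamma
  gamma_lt_one : gamma < 1

namespace DMDP

variable {S A : Type*}

/-- The trajectory of states obtained by following policy `π` from `s`. -/
def traj (M : DMDP S A) (π : S → A) (s : S) (t : ℕ) : S :=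
  (fun x => M.T x (π x))^[t] s

/-- The value function `V^π(s) = Σ_t γ^t R(s_t, π(s_t))`. -/
noncomputable def V (M : DMDP S A) (π : S → A) (s : S) : ℝ :=
  ∑' t : ℕ, M.gamma ^ t * M.R (M.traj π s t) (π (M.traj π s t))

/-- The action value function `Q^π(s, a) = R(s, a) + γ V^π(T(s, a))`. -/
noncomputable def Q (M : DMDP S A) (π : S → A) (s : S) (a : A) : ℝ :=
  M.R s a + M.gamma * M.V π (M.T s a)

/-- `π ≺ π'`: pointwise `V^π ≤ V^{π'}` with strict inequality somewhere. -/
def PLt (M : DMDP S A) (π π' : S → A) : Prop :=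
  (∀ s, M.V π s ≤ M.V π' s) ∧ ∃ s, M.V π s < M.V π' s

/-- `π'` is obtained from `π` by policy improvement with arbitrary action
selection. -/
def ImpStep (M : DMDP S A) (π π' : S → A) : Prop :=
  π' ≠ π ∧ ∀ s, π' s ≠ π s → M.V π s < M.Q π s (π' s)

/-- `π'` is obtained from `π` by policy improvement with max-gain action
selection. -/
def MaxGainStep (M : DMDP S A) (π π' : S → A) : Prop :=
  π' ≠ π ∧ ∀ s, π' s ≠ π s →
    M.V π s < M.Q π s (π' s) ∧
    ∀ a, M.V π s < M.Q π s a → M.Q π s a ≤ M.Q π s (π' s)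

/-- The first time step at which a previously visited state recurs on the
trajectory of `π` from `s`. -/
noncomputable def pcLen (M : DMDP S A) (π : S → A) (s : S) : ℕ :=
  sInf {t : ℕ | ∃ t' < t, M.traj π s t' = M.traj π s t}

/-- The path-cycle `P^π_s`: the sequence of state–action–state triples
`(s_t, π(s_t), s_{t+1})` for `t` up to (but excluding) the first recurrence
of a previously visited state. -/
noncomputable def pathCycle (M : DMDP S A) (π : S → A) (s : S) : List (S × A × S) :=
  (List.range (M.pcLen π s)).map fun t =>
    (M.traj π s t, π (M.traj π s t), M.traj π s (t + 1))

/-- The multiplicity function of the DMDP digraph `G_M`: one edge from `s`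
to `T(s, a)` for every action `a`. -/
noncomputable def digraph (M : DMDP S A) [Fintype A] : S → S → ℕ :=
  fun s s' => (Finset.univ.filter fun a => M.T s a = s').card

/-- A state is non-branching if all actions lead to the same next state. -/
def NonBranching (M : DMDP S A) (s : S) : Prop := ∃ s', ∀ a, M.T s a = s'

/-- The relation `∼` on path-cycles: same sequence of states, and wherever
the actions differ the state is non-branching. -/
def PCSim (M : DMDP S A) (P₁ P₂ : List (S × A × S)) : Prop :=
  P₁.length = P₂.length ∧
  ∀ (t : ℕ) (h₁ : t < P₁.length) (h₂ : t < P₂.length),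
    (P₁.get ⟨t, h₁⟩).1 = (P₂.get ⟨t, h₂⟩).1 ∧
    (P₁.get ⟨t, h₁⟩).2.2 = (P₂.get ⟨t, h₂⟩).2.2 ∧
    ((P₁.get ⟨t, h₁⟩).2.1 ≠ (P₂.get ⟨t, h₂⟩).2.1 → M.NonBranching (P₁.get ⟨t, h₁⟩).1)

/-- The relation `≈` on path-cycles: they differ only in equivalent edges,
i.e. have the same sequences of source and target states. -/
def PCApprox (_M : DMDP S A) (P₁ P₂ : List (S × A × S)) : Prop :=
  P₁.length = P₂.length ∧
  ∀ (t : ℕ) (h₁ : t < P₁.length) (h₂ : t < P₂.length),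
    (P₁.get ⟨t, h₁⟩).1 = (P₂.get ⟨t, h₂⟩).1 ∧
    (P₁.get ⟨t, h₁⟩).2.2 = (P₂.get ⟨t, h₂⟩).2.2

end DMDP

section PathSum

variable {V : Type*} [DecidableEq V]

/-- The total weight of the simple directed paths from `x` to `t` all of whose vertices other
than `x` lie in `U`. -/
noncomputable def pathSum (w : V → V → ℝ) (t : V) (U : Finset V) (x : V) : ℝ :=
  if x = t then 1 else ∑ v ∈ U.attach, w x v * pathSum w t (U.erase v) v
termination_by U.card
decreasing_by exact Finset.card_erase_lt_of_mem v.2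

variable {w w' : V → V → ℝ} {t x y u : V} {U : Finset V}

theorem pathSum_self : pathSum w t U t = 1 := by
  rw [pathSum, if_pos rfl]

theorem pathSum_of_ne (h : x ≠ t) :
    pathSum w t U x = ∑ v ∈ U, w x v * pathSum w t (U.erase v) v := by
  rw [pathSum, if_neg h]
  exact Finset.sum_attach U fun v => w x v * pathSum w t (U.erase v) v

theorem pathSum_nonneg (hw : ∀ a b, 0 ≤ w a b) : 0 ≤ pathSum w t U x := by
  induction U using Finset.strongInduction generalizing x with
  | H U ih =>
    by_cases hx : x = t
    · subst hx; simp [pathSum_self]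
    · rw [pathSum_of_ne hx]
      exact Finset.sum_nonneg fun v hv =>
        mul_nonneg (hw _ _) (ih _ (Finset.erase_ssubset hv))

theorem pathSum_mono (hw : ∀ a b, 0 ≤ w a b) (hxU : x ∉ U)
    (h : ∀ a ∈ insert x U, ∀ b ∈ U, b ≠ a → w a b ≤ w' a b) :
    pathSum w t U x ≤ pathSum w' t U x := by
  induction U using Finset.strongInduction generalizing x with
  | H U ih =>
    by_cases hx : x = t
    · subst hx; simp [pathSum_self]
    · rw [pathSum_of_ne hx, pathSum_of_ne hx]
      refine Finset.sum_le_sum fun v hv => ?_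
      have hle := h x (by simp) v hv (by rintro rfl; exact hxU hv)
      refine mul_le_mul hle (ih _ (Finset.erase_ssubset hv) (by simp) ?_)
        (pathSum_nonneg hw) ((hw _ _).trans hle)
      intro a ha b hb hba
      rw [Finset.insert_erase hv] at ha
      exact h a (Finset.mem_insert_of_mem ha) b (Finset.mem_of_mem_erase hb) hba

theorem pathSum_le_erase_of_row_eq_zero (hw : ∀ a b, 0 ≤ w a b) (hxU : x ∉ U) (hy : y ∈ U)
    (hyt : y ≠ t) (h : ∀ b ∈ U, b ≠ y → w y b = 0) :
    pathSum w t U x ≤ pathSum w t (U.erase y) x := by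
  induction U using Finset.strongInduction generalizing x with
  | H U ih =>
    by_cases hx : x = t
    · subst hx; simp [pathSum_self]
    · rw [pathSum_of_ne hx, pathSum_of_ne hx, ← Finset.add_sum_erase U _ hy]
      have h0 : pathSum w t (U.erase y) y = 0 := by
        rw [pathSum_of_ne hyt]
        refine Finset.sum_eq_zero fun b hb => ?_
        rw [h b (Finset.mem_of_mem_erase hb) (Finset.ne_of_mem_erase hb), zero_mul]
      rw [h0, mul_zero, zero_add]
      refine Finset.sum_le_sum fun v hv => mul_le_mul_of_nonneg_left ?_ (hw _ _)
      have hvU := Finset.mem_of_mem_erase hv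
      rw [Finset.erase_right_comm]
      exact ih _ (Finset.erase_ssubset hvU) (by simp)
        (Finset.mem_erase.2 ⟨(Finset.ne_of_mem_erase hv).symm, hy⟩)
        fun b hb => h b (Finset.mem_of_mem_erase hb)

theorem pathSum_le_erase_of_col_eq_zero (hw : ∀ a b, 0 ≤ w a b) (hxU : x ∉ U) (hy : y ∈ U)
    (h : ∀ a ∈ insert x U, a ≠ y → a ≠ t → w a y = 0) :
    pathSum w t U x ≤ pathSum w t (U.erase y) x := by
  induction U using Finset.strongInduction generalizing x with
  | H U ih =>
    by_cases hx : x = t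
    · subst hx; simp [pathSum_self]
    · rw [pathSum_of_ne hx, pathSum_of_ne hx, ← Finset.add_sum_erase U _ hy]
      rw [h x (by simp) (by rintro rfl; exact hxU hy) hx, zero_mul, zero_add]
      refine Finset.sum_le_sum fun v hv => mul_le_mul_of_nonneg_left ?_ (hw _ _)
      have hvU := Finset.mem_of_mem_erase hv
      rw [Finset.erase_right_comm]
      refine ih _ (Finset.erase_ssubset hvU) (by simp)
        (Finset.mem_erase.2 ⟨(Finset.ne_of_mem_erase hv).symm, hy⟩) fun a ha => h a ?_
      rw [Finset.insert_erase hvU] at ha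
      exact Finset.mem_insert_of_mem ha

/-- Contracting a vertex `y` whose only out-edge goes to `u` into `u`. -/
theorem pathSum_le_mul_erase {q D : ℝ} (hw : ∀ a b, 0 ≤ w a b) (hw' : ∀ a b, 0 ≤ w' a b)
    (hD : 1 ≤ D) (hxU : x ∉ U) (hy : y ∈ U) (hyt : y ≠ t) (hyu : y ≠ u)
    (hrow : ∀ b, b ≠ u → w y b = 0) (hq : w y u ≤ q)
    (hle : ∀ a, a ≠ y → ∀ b, b ≠ y → b ≠ u → w a b ≤ w' a b)
    (hu : ∀ a, a ≠ y → w a u + q * w a y ≤ D * w' a u) :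
    pathSum w t U x ≤ D * pathSum w' t (U.erase y) x := by
  have hD0 : 0 ≤ D := zero_le_one.trans hD
  have key : ∀ (U : Finset V) (x : V), x ∉ U → x ≠ y → y ∈ U → u ∉ U →
      pathSum w t U x ≤ pathSum w' t (U.erase y) x := by
    intro U x hxU hxy hy huU
    refine (pathSum_le_erase_of_row_eq_zero hw hxU hy hyt fun b hb _ => hrow b ?_).trans
      (pathSum_mono hw (by simp [hxU]) fun a ha b hb hba => hle a ?_ b
        (Finset.ne_of_mem_erase hb) ?_)
    · rintro rfl; exact huU hb
    · rcases Finset.mem_insert.1 ha with rfl | ha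
      · exact hxy
      · exact Finset.ne_of_mem_erase ha
    · rintro rfl; exact huU (Finset.mem_of_mem_erase hb)
  induction U using Finset.strongInduction generalizing x with
  | H U ih =>
    have hxy : x ≠ y := by rintro rfl; exact hxU hy
    by_cases hx : x = t
    · subst hx; simpa [pathSum_self] using hD
    by_cases huU : u ∈ U
    swap
    · refine (key U x hxU hxy hy huU).trans ?_
      exact le_mul_of_one_le_left (pathSum_nonneg hw') hD
    have huy : u ∈ U.erase y := Finset.mem_erase.2 ⟨hyu.symm, huU⟩
    have hyu' : y ∈ U.erase u := Finset.mem_erase.2 ⟨hyu, hy⟩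
    rw [pathSum_of_ne hx, pathSum_of_ne hx, ← Finset.add_sum_erase U _ hy,
      ← Finset.add_sum_erase _ _ huy, ← Finset.add_sum_erase (U.erase y) _ huy, mul_add,
      ← add_assoc]
    refine add_le_add ?_ ?_
    · have h1 : pathSum w t (U.erase y) y ≤ q * pathSum w' t ((U.erase y).erase u) u := by
        rw [pathSum_of_ne hyt, ← Finset.add_sum_erase _ _ huy, Finset.sum_eq_zero, add_zero]
        · refine mul_le_mul hq (pathSum_mono hw (by simp) fun a ha b hb hba => hle a ?_ b ?_ ?_)
            (pathSum_nonneg hw) ((hw _ _).trans hq)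
          · rw [Finset.insert_erase huy] at ha; exact Finset.ne_of_mem_erase ha
          · exact Finset.ne_of_mem_erase (Finset.mem_of_mem_erase hb)
          · exact Finset.ne_of_mem_erase hb
        · intro b hb
          rw [hrow b (Finset.ne_of_mem_erase hb), zero_mul]
      have h2 : pathSum w t (U.erase u) u ≤ pathSum w' t ((U.erase y).erase u) u := by
        rw [Finset.erase_right_comm]
        exact key _ u (by simp) hyu.symm hyu' (by simp)
      have h3 := pathSum_nonneg (t := t) (U := (U.erase y).erase u) (x := u) hw'
      calc _ ≤ w x y * (q * pathSum w' t ((U.erase y).erase u) u) +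
            w x u * pathSum w' t ((U.erase y).erase u) u :=
            add_le_add (mul_le_mul_of_nonneg_left h1 (hw _ _))
              (mul_le_mul_of_nonneg_left h2 (hw _ _))
        _ = (w x u + q * w x y) * pathSum w' t ((U.erase y).erase u) u := by ring
        _ ≤ _ := by
            rw [← mul_assoc]
            exact mul_le_mul_of_nonneg_right (hu x hxy) h3
    · rw [Finset.mul_sum]
      refine Finset.sum_le_sum fun v hv => ?_
      have hvu := Finset.ne_of_mem_erase hv
      have hvy := Finset.ne_of_mem_erase (Finset.mem_of_mem_erase hv)
      have hvU := Finset.mem_of_mem_erase (Finset.mem_of_mem_erase hv)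
      have h1 := ih _ (Finset.erase_ssubset hvU) (x := v) (by simp)
        (Finset.mem_erase.2 ⟨hvy.symm, hy⟩)
      rw [Finset.erase_right_comm] at h1
      calc _ ≤ w' x v * (D * pathSum w' t ((U.erase y).erase v) v) :=
            mul_le_mul (hle x hxy v hvy hvu) h1 (pathSum_nonneg hw) (hw' _ _)
        _ = _ := by ring

/-- If `x₁` and `x₂` both have an edge to `v`, then no path uses both of these edges. -/
theorem pathSum_le_add_of_common_target {w₁ w₂ : V → V → ℝ} {x₁ x₂ v : V} {r : ℝ}
    (hw : ∀ a b, 0 ≤ w a b) (hw₁ : ∀ a b, 0 ≤ w₁ a b) (hw₂ : ∀ a b, 0 ≤ w₂ a b)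
    (hr : 0 ≤ r) (hxU : x ∉ U) (hne : x₁ ≠ x₂)
    (h₁ : ∀ a b, a ≠ x₁ ∨ b ≠ v → w a b ≤ w₁ a b)
    (h₂ : ∀ a b, a ≠ x₁ → a ≠ x₂ ∨ b ≠ v → w a b ≤ w₂ a b)
    (hr₂ : w x₁ v ≤ r * w₂ x₁ v) :
    pathSum w t U x ≤ pathSum w₁ t U x + r * pathSum w₂ t U x := by
  have hmono₁ : ∀ {U : Finset V} {z : V}, z ∉ U → (z = v ∨ z = x₁ ∨ x₁ ∉ U ∧ z ≠ x₁) →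
      (z = x₁ → v ∉ U) → pathSum w t U z ≤ pathSum w₁ t U z := by
    intro U z hz hc hzv
    refine pathSum_mono hw hz fun a ha b hb hba => h₁ a b ?_
    rcases hc with rfl | rfl | ⟨hc, hc'⟩
    · right; rintro rfl; exact hz hb
    · right; rintro rfl; exact hzv rfl hb
    · left; rintro rfl
      rcases Finset.mem_insert.1 ha with rfl | ha
      · exact hc' rfl
      · exact hc ha
  induction U using Finset.strongInduction generalizing x with
  | H U ih =>
    by_cases hx : x = t
    · subst hx; simp only [pathSum_self]; linarith
    rw [pathSum_of_ne hx, pathSum_of_ne hx, pathSum_of_ne hx, Finset.mul_sum,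
      ← Finset.sum_add_distrib]
    refine Finset.sum_le_sum fun z hz => ?_
    have hp := pathSum_nonneg (t := t) (U := U.erase z) (x := z) hw
    have hp₁ := pathSum_nonneg (t := t) (U := U.erase z) (x := z) hw₁
    have hp₂ := pathSum_nonneg (t := t) (U := U.erase z) (x := z) hw₂
    by_cases hx₁ : x = x₁
    · by_cases hzv : z = v
      · subst hx₁ hzv
        have h : pathSum w t (U.erase z) z ≤ pathSum w₂ t (U.erase z) z := by
          refine pathSum_mono hw (by simp) fun a ha b hb hba => h₂ a b ?_
            (Or.inr (Finset.ne_of_mem_erase hb))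
          rw [Finset.insert_erase hz] at ha
          rintro rfl; exact hxU ha
        have := mul_le_mul hr₂ h hp (mul_nonneg hr (hw₂ _ _))
        have := mul_nonneg (hw₁ x z) hp₁
        linarith
      · have h : pathSum w t (U.erase z) z ≤ pathSum w₁ t (U.erase z) z := by
          subst hx₁
          refine hmono₁ (by simp) (Or.inr (Or.inr ⟨?_, ?_⟩)) ?_
          · simp [hxU]
          · rintro rfl; exact hxU hz
          · rintro rfl; exact absurd hz hxU
        have := mul_le_mul (h₁ x z (Or.inr hzv)) h hp (hw₁ _ _)
        have := mul_nonneg hr (mul_nonneg (hw₂ x z) hp₂)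
        linarith
    · by_cases hc : x ≠ x₂ ∨ z ≠ v
      · have h := ih _ (Finset.erase_ssubset hz) (x := z) (by simp)
        have a1 := mul_le_mul_of_nonneg_left h (hw x z)
        have a2 := mul_le_mul_of_nonneg_right (h₁ x z (Or.inl hx₁)) hp₁
        have a3 := mul_le_mul_of_nonneg_left
          (mul_le_mul_of_nonneg_right (h₂ x z hx₁ hc) hp₂) hr
        nlinarith
      · push Not at hc
        obtain ⟨hc1, hc2⟩ := hc
        have h : pathSum w t (U.erase z) z ≤ pathSum w₁ t (U.erase z) z := by
          subst hc2
          exact hmono₁ (by simp) (Or.inl rfl) fun _ => by simp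
        have := mul_le_mul (h₁ x z (Or.inl hx₁)) h hp (hw₁ _ _)
        have := mul_nonneg hr (mul_nonneg (hw₂ x z) hp₂)
        linarith

/-- Path sums are affine with nonnegative coefficients in every row of the weight matrix. -/
theorem exists_pathSum_update_eq [Fintype V] (hw : ∀ a b, 0 ≤ w a b) (t y x : V) (U : Finset V)
    (hxU : x ∉ U) :
    ∃ (A : ℝ) (B : V → ℝ), (∀ v, 0 ≤ B v) ∧
      ∀ r : V → ℝ, pathSum (Function.update w y r) t U x = A + ∑ v, r v * B v := by
  induction U using Finset.strongInduction generalizing x with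
  | H U ih =>
    by_cases hx : x = t
    · subst hx
      exact ⟨1, 0, by simp, by simp [pathSum_self]⟩
    by_cases hxy : x = y
    · subst hxy
      refine ⟨0, fun v => if v ∈ U then pathSum w t (U.erase v) v else 0, fun v => ?_, fun r => ?_⟩
      · dsimp only
        split_ifs
        · exact pathSum_nonneg hw
        · exact le_rfl
      · rw [pathSum_of_ne hx, zero_add]
        simp only [mul_ite, mul_zero, Function.update_self]
        rw [Finset.sum_ite_mem, Finset.univ_inter]
        refine Finset.sum_congr rfl fun v hv => ?_
        congr 1
        have aux : ∀ (U : Finset V) (z : V), x ∉ U → z ≠ x →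
            pathSum (Function.update w x r) t U z = pathSum w t U z := by
          intro U
          induction U using Finset.strongInduction with
          | H U ih =>
            intro z hxU hz
            by_cases hzt : z = t
            · subst hzt; simp [pathSum_self]
            · rw [pathSum_of_ne hzt, pathSum_of_ne hzt]
              refine Finset.sum_congr rfl fun v hv => ?_
              rw [Function.update_of_ne hz, ih _ (Finset.erase_ssubset hv) v (by simp [hxU])
                (by rintro rfl; exact hxU hv)]
        exact aux _ _ (by simp [hxU]) (by rintro rfl; exact hxU hv)
    · have h : ∀ v : V, ∃ (A : ℝ) (B : V → ℝ), (∀ v, 0 ≤ B v) ∧ (v ∈ U →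
          ∀ r : V → ℝ, pathSum (Function.update w y r) t (U.erase v) v = A + ∑ v, r v * B v) := by
        intro v
        by_cases hv : v ∈ U
        · obtain ⟨A, B, hB, h⟩ := ih _ (Finset.erase_ssubset hv) v (by simp)
          exact ⟨A, B, hB, fun _ => h⟩
        · exact ⟨0, 0, by simp, fun h => absurd h hv⟩
      choose A B hB h using h
      refine ⟨∑ v ∈ U, w x v * A v, fun z => ∑ v ∈ U, w x v * B v z, fun z =>
        Finset.sum_nonneg fun v _ => mul_nonneg (hw _ _) (hB _ _), fun r => ?_⟩
      rw [pathSum_of_ne hx]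
      simp only [Finset.mul_sum]
      rw [Finset.sum_comm, ← Finset.sum_add_distrib]
      refine Finset.sum_congr rfl fun v hv => ?_
      rw [h v hv, Function.update_of_ne hxy, mul_add, Finset.mul_sum]
      congr 1
      exact Finset.sum_congr rfl fun z _ => by ring

/-- A row of weights dominated either by a heavy entry `c` and a light entry `1` in different
places, or by a single entry `α`. -/
def IsExtremalRow (c α : ℝ) (r : V → ℝ) : Prop :=
  (∃ f g, f ≠ g ∧ ∀ v, r v ≤ (if v = f then c else 0) + (if v = g then 1 else 0)) ∨
    ∃ f, ∀ v, r v ≤ if v = f then α else 0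

theorem IsExtremalRow.anti {c α : ℝ} {r r' : V → ℝ} (h : IsExtremalRow c α r)
    (hle : ∀ v, r' v ≤ r v) : IsExtremalRow c α r' := by
  rcases h with ⟨f, g, hfg, h⟩ | ⟨f, h⟩
  · exact Or.inl ⟨f, g, hfg, fun v => (hle v).trans (h v)⟩
  · exact Or.inr ⟨f, fun v => (hle v).trans (h v)⟩

theorem IsExtremalRow.contract {c α q D : ℝ} {r : V → ℝ} {g : V} (h : IsExtremalRow c α r)
    (hc : 1 ≤ c) (hα : 1 ≤ α) (hq : 0 ≤ q) (hD : 1 ≤ D) (hqD : q ≤ D) (hD₁ : c * q + 1 ≤ α * D)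
    (hD₂ : c + q ≤ α * D) (hyg : y ≠ g) :
    IsExtremalRow c α fun v => if v = y then 0 else if v = g then (r g + q * r y) / D else r v := by
  have hD0 : 0 < D := by linarith
  have red : ∀ s : V → ℝ, 0 ≤ s y → r g + q * r y ≤ s g * D →
      (∀ v, v ≠ y → v ≠ g → r v ≤ s v) →
      ∀ v, (if v = y then 0 else if v = g then (r g + q * r y) / D else r v) ≤ s v := by
    intro s h1 h2 h3 v
    split_ifs with hvy hvg
    · rw [hvy]; exact h1
    · rw [hvg]; exact (div_le_iff₀ hD0).2 h2
    · exact h3 v hvy hvg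
  have hgy := hyg.symm
  rcases h with ⟨f, h, hfh, hr⟩ | ⟨f, hr⟩
  · have hg := hr g
    have hy := mul_le_mul_of_nonneg_left (hr y) hq
    have hhf := hfh.symm
    have e1 : c ≤ c * D := by nlinarith
    have e2 : q * c ≤ c * D := by nlinarith
    by_cases hfy : f = y
    · subst hfy
      by_cases hhg : h = g
      · subst hhg
        refine Or.inr ⟨h, red _ ?_ ?_ fun v hv hv' => ?_⟩
        · simp [hyg]
        · simp [hyg, hgy] at hg hy ⊢; linarith
        · simpa [hv, hv'] using hr v
      · have hgh := Ne.symm hhg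
        refine Or.inl ⟨g, h, hgh, red _ ?_ ?_ fun v hv hv' => ?_⟩
        · simp [hyg, hfh]
        · simp [hgy, hgh, hfh] at hg hy ⊢; linarith
        · simpa [hv, hv'] using hr v
    · have hyf := Ne.symm hfy
      by_cases hhy : h = y
      · subst hhy
        by_cases hfg : f = g
        · subst hfg
          refine Or.inr ⟨f, red _ ?_ ?_ fun v hv hv' => ?_⟩
          · simp [hyg]
          · simp [hyg, hgy] at hg hy ⊢; linarith
          · simpa [hv, hv'] using hr v
        · have hgf := Ne.symm hfg
          refine Or.inl ⟨f, g, hfg, red _ ?_ ?_ fun v hv hv' => ?_⟩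
          · simp [hyg, hyf]
          · simp [hgy, hgf, hyf] at hg hy ⊢; linarith
          · simpa [hv, hv'] using hr v
      · have hyh := Ne.symm hhy
        refine Or.inl ⟨f, h, hfh, red _ ?_ ?_ fun v _ _ => hr v⟩
        · simp [hyf, hyh]
        · simp only [hyf, hyh, if_false, add_zero, mul_zero] at hy
          split_ifs at hg ⊢ <;> nlinarith
  · have hg := hr g
    have hy := mul_le_mul_of_nonneg_left (hr y) hq
    by_cases hfy : f = y
    · subst hfy
      refine Or.inr ⟨g, red _ ?_ ?_ fun v hv hv' => ?_⟩
      · simp [hyg]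
      · simp [hgy] at hg hy ⊢; nlinarith
      · simpa [hv, hv'] using hr v
    · have hyf := Ne.symm hfy
      refine Or.inr ⟨f, red _ ?_ ?_ fun v _ _ => hr v⟩
      · simp [hyf]
      · simp only [hyf, if_false, mul_zero] at hy
        split_ifs at hg ⊢ <;> nlinarith

/-- The bound improves when some vertex has a single relevant out-edge, given the general bound
for smaller vertex sets. -/
theorem pathSum_le_of_single_row {c α q D : ℝ} {g : V}
    (ih : ∀ (U' : Finset V) (x' : V) (v : V → V → ℝ), U'.card < U.card → x' ∉ U' →
      (∀ a b, 0 ≤ v a b) → (∀ a, IsExtremalRow c α (v a)) → pathSum v t U' x' ≤ α ^ U'.card)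
    (hc : 1 ≤ c) (hα : 1 ≤ α) (hD : 1 ≤ D) (hqD : q ≤ D) (hD₁ : c * q + 1 ≤ α * D)
    (hD₂ : c + q ≤ α * D) (hw : ∀ a b, 0 ≤ w a b) (hrow : ∀ a, IsExtremalRow c α (w a))
    (hxU : x ∉ U) (hy : y ∈ insert x U) (hyt : y ≠ t)
    (hg : ∀ b ∈ U, b ≠ y → b ≠ g → w y b ≤ 0) (hq : w y g ≤ q) :
    pathSum w t U x ≤ D * α ^ (U.card - 1) := by
  have hα0 : 0 ≤ α := zero_le_one.trans hα
  have hq0 : 0 ≤ q := (hw _ _).trans hq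
  have hpow : 0 ≤ α ^ (U.card - 1) := pow_nonneg hα0 _
  rcases Finset.mem_insert.1 hy with rfl | hyU
  · rw [pathSum_of_ne hyt]
    have h : ∀ v ∈ U, w y v * pathSum w t (U.erase v) v ≤
        if v = g then D * α ^ (U.card - 1) else 0 := by
      intro v hv
      split_ifs with hvg
      · subst hvg
        have := ih (U.erase v) v w (Finset.card_erase_lt_of_mem hv) (by simp) hw hrow
        rw [Finset.card_erase_of_mem hv] at this
        exact mul_le_mul (hq.trans hqD) this (pathSum_nonneg hw) (by linarith)
      · have := hg v hv (by rintro rfl; exact hxU hv) hvg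
        rw [le_antisymm this (hw _ _), zero_mul]
    refine (Finset.sum_le_sum h).trans ?_
    rw [Finset.sum_ite_eq']
    split_ifs
    · exact le_rfl
    · positivity
  · have hlt := Finset.card_erase_lt_of_mem hyU
    have hcard := Finset.card_erase_of_mem hyU
    have hxe : x ∉ U.erase y := by simp [hxU]
    by_cases hyg : y = g
    · subst hyg
      have h1 := pathSum_le_erase_of_row_eq_zero hw hxU hyU hyt
        fun b hb hby => le_antisymm (hg b hb hby hby) (hw _ _)
      have h2 := ih _ x w hlt hxe hw hrow
      rw [hcard] at h2
      exact (h1.trans h2).trans (le_mul_of_one_le_left hpow hD)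
    · set w₂ : V → V → ℝ := Function.update w y fun b => if b = g then w y g else 0 with hw₂
      set w' : V → V → ℝ := fun a => if a = y then 0 else fun v =>
        if v = y then 0 else if v = g then (w a g + q * w a y) / D else w a v with hw'
      have hw₂0 : ∀ a b, 0 ≤ w₂ a b := by
        intro a b
        by_cases ha : a = y
        · subst ha
          rw [hw₂, Function.update_self]
          split_ifs
          exacts [hw _ _, le_rfl]
        · rw [hw₂, Function.update_of_ne ha]; exact hw _ _
      have hw'0 : ∀ a b, 0 ≤ w' a b := by
        intro a b
        have h1 := hw a g
        have h2 := hw a y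
        have h3 := hw a b
        simp only [hw']
        split_ifs
        all_goals simp only [Pi.zero_apply]
        all_goals positivity
      have hrow' : ∀ a, IsExtremalRow c α (w' a) := by
        intro a
        by_cases ha : a = y
        · refine Or.inr ⟨g, fun v => ?_⟩
          simp only [hw', if_pos ha, Pi.zero_apply]
          split_ifs <;> linarith
        · simp only [hw', if_neg ha]
          exact (hrow a).contract hc hα hq0 hD hqD hD₁ hD₂ hyg
      have h1 : pathSum w t U x ≤ pathSum w₂ t U x := by
        refine pathSum_mono hw hxU fun a _ b hb hba => ?_
        by_cases ha : a = y
        · subst ha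
          rw [hw₂, Function.update_self]
          split_ifs with h
          · rw [h]
          · exact hg b hb hba h
        · rw [hw₂, Function.update_of_ne ha]
      have h2 : pathSum w₂ t U x ≤ D * pathSum w' t (U.erase y) x := by
        refine pathSum_le_mul_erase (q := q) (u := g) hw₂0 hw'0 hD hxU hyU hyt hyg ?_ ?_ ?_ ?_
        · intro b hb; rw [hw₂, Function.update_self, if_neg hb]
        · rw [hw₂, Function.update_self, if_pos rfl]; exact hq
        · intro a ha b hby hbg
          rw [hw₂, Function.update_of_ne ha]
          simp only [hw', if_neg ha, if_neg hby, if_neg hbg, le_refl]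
        · intro a ha
          rw [hw₂, Function.update_of_ne ha]
          simp only [hw', if_neg ha, if_neg (Ne.symm hyg), if_true]
          rw [mul_div_cancel₀ _ (by linarith)]
      have h3 := ih _ x w' hlt hxe hw'0 hrow'
      rw [hcard] at h3
      exact (h1.trans h2).trans (mul_le_mul_of_nonneg_left h3 (by linarith))

/-- The weight of simple paths with `α`-extremal rows is at most `α` to the number of vertices. -/
theorem pathSum_le_pow_of_extremal {c α : ℝ} (hc : 1 ≤ c) (hc₂ : c = 1 ∨ 2 ≤ c) (hcα : c ≤ α)
    (hα : α ^ 2 = c * α + 1) (hw : ∀ a b, 0 ≤ w a b) (hrow : ∀ a, IsExtremalRow c α (w a))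
    (hxU : x ∉ U) : pathSum w t U x ≤ α ^ U.card := by
  have hα1 : 1 ≤ α := hc.trans hcα
  have hα0 : 0 < α := by linarith
  have hαc : α ≤ c + 1 := by nlinarith
  have hD₁ : 1 ≤ (c + 1) / α := by rw [le_div_iff₀ hα0]; linarith
  have hDc : c ≤ (c ^ 2 + 1) / α := by
    rw [le_div_iff₀ hα0]; nlinarith
  have hmul₁ : α * ((c + 1) / α) = c + 1 := mul_div_cancel₀ _ hα0.ne'
  have hmulc : α * ((c ^ 2 + 1) / α) = c ^ 2 + 1 := mul_div_cancel₀ _ hα0.ne'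
  induction hn : U.card using Nat.strongRecOn generalizing U x w with
  | ind n IH =>
  have ih : ∀ (U' : Finset V) (x' : V) (v : V → V → ℝ), U'.card < U.card → x' ∉ U' →
      (∀ a b, 0 ≤ v a b) → (∀ a, IsExtremalRow c α (v a)) →
      pathSum v t U' x' ≤ α ^ U'.card := by
    intro U' x' v hlt hx' hv hr
    exact IH _ (hn ▸ hlt) hv hr hx' rfl
  by_cases hxt : x = t
  · subst hxt; rw [pathSum_self]; exact one_le_pow₀ hα1
  rcases Nat.eq_zero_or_pos U.card with h0 | hpos
  · rw [Finset.card_eq_zero] at h0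
    subst h0
    rw [pathSum_of_ne hxt, Finset.sum_empty]; positivity
  obtain ⟨m, hm⟩ : ∃ m, n = m + 1 := ⟨n - 1, by omega⟩
  have hUm : U.card - 1 = m := by omega
  rw [hm, pow_succ']
  have hpm : 0 < α ^ m := by positivity
  by_cases hs : ∃ y ∈ insert x U, y ≠ t ∧ ∃ f, ∀ v, w y v ≤ if v = f then α else 0
  · obtain ⟨y, hy, hyt, f, hf⟩ := hs
    rw [← hUm]
    refine pathSum_le_of_single_row (q := α) (g := f) ih hc hα1 hα1 le_rfl ?_ ?_ hw hrow hxU hy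
      hyt (fun b _ _ hb => by simpa [hb] using hf b) (by simpa using hf f)
    · nlinarith
    · nlinarith
  have hfull : ∀ a, ∃ f g, a ∈ insert x U → a ≠ t →
      f ≠ g ∧ ∀ v, w a v ≤ (if v = f then c else 0) + (if v = g then 1 else 0) := by
    intro a
    rcases hrow a with ⟨f, g, hfg, h⟩ | ⟨f, h⟩
    · exact ⟨f, g, fun _ _ => ⟨hfg, h⟩⟩
    · exact ⟨x, x, fun h1 h2 => absurd ⟨a, h1, h2, f, h⟩ hs⟩
  choose f g hfg using hfull
  have hne : ∀ a ∈ insert x U, a ≠ t → f a ≠ g a := fun a h1 h2 => (hfg a h1 h2).1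
  have hzero : ∀ a ∈ insert x U, a ≠ t → ∀ b, b ≠ f a → b ≠ g a → w a b ≤ 0 := by
    intro a h1 h2 b h3 h4
    simpa [h3, h4] using (hfg a h1 h2).2 b
  have hheavy : ∀ a ∈ insert x U, a ≠ t → w a (f a) ≤ c := by
    intro a h1 h2
    simpa [hne a h1 h2] using (hfg a h1 h2).2 (f a)
  have hlight : ∀ a ∈ insert x U, a ≠ t → w a (g a) ≤ 1 := by
    intro a h1 h2
    simpa [(hne a h1 h2).symm] using (hfg a h1 h2).2 (g a)
  have hx : x ∈ insert x U := Finset.mem_insert_self _ _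
  have hcollide : 2 ≤ c → (∃ x₁ ∈ insert x U, x₁ ≠ t ∧ ∃ x₂ ∈ insert x U, x₂ ≠ t ∧ x₁ ≠ x₂ ∧
      f x₁ = f x₂) → pathSum w t U x ≤ α * α ^ m := by
    rintro hc₂ ⟨x₁, h₁, h₁t, x₂, h₂, h₂t, h₁₂, hv⟩
    set w₁ : V → V → ℝ := Function.update w x₁ (Function.update (w x₁) (f x₁) 0) with hw₁
    set w₂ : V → V → ℝ := Function.update (Function.update w x₁ fun b => if b = f x₁ then α else 0)
      x₂ (Function.update (w x₂) (f x₁) 0) with hw₂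
    have hle : ∀ a b, Function.update (w a) (f x₁) 0 b ≤ w a b := by
      intro a b
      by_cases hb : b = f x₁
      · subst hb; rw [Function.update_self]; exact hw _ _
      · rw [Function.update_of_ne hb]
    have hnn : ∀ a b, 0 ≤ Function.update (w a) (f x₁) 0 b := by
      intro a b
      by_cases hb : b = f x₁
      · subst hb; rw [Function.update_self]
      · rw [Function.update_of_ne hb]; exact hw _ _
    have hw₁0 : ∀ a b, 0 ≤ w₁ a b := by
      intro a b
      by_cases ha : a = x₁
      · subst ha; rw [hw₁, Function.update_self]; exact hnn _ _
      · rw [hw₁, Function.update_of_ne ha]; exact hw _ _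
    have hw₂0 : ∀ a b, 0 ≤ w₂ a b := by
      intro a b
      by_cases ha : a = x₂
      · subst ha; rw [hw₂, Function.update_self]; exact hnn _ _
      · rw [hw₂, Function.update_of_ne ha]
        by_cases ha : a = x₁
        · subst ha; rw [Function.update_self]; split_ifs <;> linarith
        · rw [Function.update_of_ne ha]; exact hw _ _
    have hrow₁ : ∀ a, IsExtremalRow c α (w₁ a) := by
      intro a
      by_cases ha : a = x₁
      · subst ha; rw [hw₁, Function.update_self]; exact (hrow a).anti (hle a)
      · rw [hw₁, Function.update_of_ne ha]; exact hrow a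
    have hrow₂ : ∀ a, IsExtremalRow c α (w₂ a) := by
      intro a
      by_cases ha : a = x₂
      · subst ha; rw [hw₂, Function.update_self]; exact (hrow a).anti (hle a)
      · rw [hw₂, Function.update_of_ne ha]
        by_cases ha : a = x₁
        · subst ha; rw [Function.update_self]; exact Or.inr ⟨f a, fun v => le_rfl⟩
        · rw [Function.update_of_ne ha]; exact hrow a
    have hsum := pathSum_le_add_of_common_target (t := t) (w₁ := w₁) (w₂ := w₂) (v := f x₁)
      (r := c / α) hw hw₁0 hw₂0 (by positivity) hxU h₁₂ ?_ ?_ ?_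
    · have hs₁ : pathSum w₁ t U x ≤ (c + 1) / α * α ^ m := by
        rw [← hUm]
        refine pathSum_le_of_single_row (q := 1) (g := g x₁) ih hc hα1 hD₁ hD₁ (by linarith)
          (by linarith) hw₁0 hrow₁ hxU h₁ h₁t ?_ ?_
        · intro b _ _ hb
          rw [hw₁, Function.update_self]
          by_cases hb' : b = f x₁
          · rw [hb', Function.update_self]
          · rw [Function.update_of_ne hb']; exact hzero x₁ h₁ h₁t b hb' hb
        · rw [hw₁, Function.update_self]; exact (hle _ _).trans (hlight x₁ h₁ h₁t)
      have hs₂ : pathSum w₂ t U x ≤ (c + 1) / α * α ^ m := by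
        rw [← hUm]
        refine pathSum_le_of_single_row (q := 1) (g := g x₂) ih hc hα1 hD₁ hD₁ (by linarith)
          (by linarith) hw₂0 hrow₂ hxU h₂ h₂t ?_ ?_
        · intro b _ _ hb
          rw [hw₂, Function.update_self]
          by_cases hb' : b = f x₁
          · rw [hb', Function.update_self]
          · rw [Function.update_of_ne hb']; exact hzero x₂ h₂ h₂t b (hv ▸ hb') hb
        · rw [hw₂, Function.update_self]; exact (hle _ _).trans (hlight x₂ h₂ h₂t)
      have hnum : (c + 1) / α + c / α * ((c + 1) / α) ≤ α := by
        rw [div_mul_div_comm, div_add_div _ _ hα0.ne' (by positivity), div_le_iff₀ (by positivity)]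
        have h3 : α ^ 3 = c ^ 2 * α + c + α := by
          calc α ^ 3 = α * α ^ 2 := by ring
            _ = c * α ^ 2 + α := by linear_combination α * hα
            _ = _ := by rw [hα]; ring
        have h4 : α + c ≤ c * α := by nlinarith
        have h5 : (c + 1) * (α + c) ≤ α ^ 3 := by rw [h3]; nlinarith
        nlinarith [mul_le_mul_of_nonneg_left h5 hα0.le]
      have h6 := mul_le_mul_of_nonneg_left hs₂ (show 0 ≤ c / α by positivity)
      calc _ ≤ _ := hsum
        _ ≤ (c + 1) / α * α ^ m + c / α * ((c + 1) / α * α ^ m) := add_le_add hs₁ h6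
        _ = ((c + 1) / α + c / α * ((c + 1) / α)) * α ^ m := by ring
        _ ≤ _ := mul_le_mul_of_nonneg_right hnum hpm.le
    · intro a b hab
      by_cases ha : a = x₁
      · subst ha
        rw [hw₁, Function.update_self, Function.update_of_ne (by simpa using hab)]
      · rw [hw₁, Function.update_of_ne ha]
    · intro a b ha hab
      by_cases ha₂ : a = x₂
      · subst ha₂
        rw [hw₂, Function.update_self, Function.update_of_ne (by simpa using hab)]
      · rw [hw₂, Function.update_of_ne ha₂, Function.update_of_ne ha]
    · rw [hw₂, Function.update_of_ne h₁₂, Function.update_self, if_pos rfl,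
        div_mul_cancel₀ _ hα0.ne']
      exact hheavy x₁ h₁ h₁t
  have hescape : (∃ r ∈ insert x U, r ≠ t ∧ (f r ∉ U ∨ f r = r)) →
      pathSum w t U x ≤ α * α ^ m := by
    rintro ⟨r, hr, hrt, hfr⟩
    have : pathSum w t U x ≤ (c + 1) / α * α ^ m := by
      rw [← hUm]
      refine pathSum_le_of_single_row (q := 1) (g := g r) ih hc hα1 hD₁ hD₁ (by linarith)
        (by linarith) hw hrow hxU hr hrt (fun b hb hbr hbg => hzero r hr hrt b ?_ hbg)
        (hlight r hr hrt)
      rintro rfl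
      rcases hfr with h | h
      exacts [h hb, hbr h]
    refine this.trans (mul_le_mul_of_nonneg_right ?_ hpm.le)
    rw [div_le_iff₀ hα0]; nlinarith
  have hP : ∀ v ∈ U, pathSum w t (U.erase v) v ≤ α ^ m := by
    intro v hv
    have := ih (U.erase v) v w (Finset.card_erase_lt_of_mem hv) (by simp) hw hrow
    rwa [Finset.card_erase_of_mem hv, hUm] at this
  set P : V → ℝ := fun v => pathSum w t (U.erase v) v
  have hP0 : ∀ v, 0 ≤ P v := fun v => pathSum_nonneg hw
  have hstep : pathSum w t U x ≤
      (if f x ∈ U then c * P (f x) else 0) + (if g x ∈ U then P (g x) else 0) := by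
    rw [pathSum_of_ne hxt]
    calc _ ≤ ∑ v ∈ U, ((if v = f x then c * P v else 0) + (if v = g x then P v else 0)) := by
          refine Finset.sum_le_sum fun v _ => ?_
          refine (mul_le_mul_of_nonneg_right ((hfg x hx hxt).2 v) (hP0 v)).trans (le_of_eq ?_)
          split_ifs <;> ring
      _ = _ := by rw [Finset.sum_add_distrib, Finset.sum_ite_eq', Finset.sum_ite_eq']
  by_cases haU : f x ∈ U
  swap
  · exact hescape ⟨x, hx, hxt, Or.inl haU⟩
  rw [if_pos haU] at hstep
  by_cases hbU : g x ∈ U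
  swap
  · rw [if_neg hbU, add_zero] at hstep
    exact hstep.trans (mul_le_mul hcα (hP _ haU) (hP0 _) hα0.le)
  rw [if_pos hbU] at hstep
  have hab := hne x hx hxt
  obtain ⟨l, hl⟩ : ∃ l, m = l + 1 := by
    have := Finset.one_lt_card.2 ⟨_, haU, _, hbU, hab⟩
    exact ⟨m - 1, by omega⟩
  have hpl : 0 < α ^ l := by positivity
  have hcard : ∀ v ∈ U, (U.erase v).card = l + 1 := fun v hv => by
    rw [Finset.card_erase_of_mem hv]; omega
  have hins : ∀ v ∈ U, insert v (U.erase v) = U := fun v hv => Finset.insert_erase hv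
  have hmem : ∀ y ∈ U, y ∈ insert x U := fun y hy => Finset.mem_insert_of_mem hy
  have ih' : ∀ v ∈ U, ∀ (U' : Finset V) (x' : V) (v' : V → V → ℝ), U'.card < (U.erase v).card →
      x' ∉ U' → (∀ a b, 0 ≤ v' a b) → (∀ a, IsExtremalRow c α (v' a)) →
      pathSum v' t U' x' ≤ α ^ U'.card := fun v hv U' x' v' hlt =>
    ih U' x' v' (hlt.trans (Finset.card_erase_lt_of_mem hv))
  have hdead : ∀ v ∈ U, ∀ u ∈ U, v ≠ u →
      (∀ y ∈ U, y ≠ t → y ≠ v → v ≠ f y ∧ v ≠ g y) → P u ≤ α ^ l := by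
    intro v hv u hu hvu h
    have hvu' : v ∈ U.erase u := Finset.mem_erase.2 ⟨hvu, hv⟩
    have h1 : P u ≤ pathSum w t ((U.erase u).erase v) u := by
      refine pathSum_le_erase_of_col_eq_zero hw (by simp) hvu' fun a ha hav hat => ?_
      rw [hins u hu] at ha
      have := h a ha hat hav
      exact le_antisymm (hzero a (hmem a ha) hat v this.1 this.2) (hw _ _)
    have hlt := Finset.card_erase_lt_of_mem hvu'
    have h2 := ih' u hu _ u w hlt (by simp) hw hrow
    rw [Finset.card_erase_of_mem hvu', hcard u hu] at h2
    exact h1.trans h2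
  have hheavyP : ∀ v ∈ U, (∃ y ∈ U, y ≠ t ∧ y ≠ v ∧ (v = f y ∨ v = g y)) →
      P v ≤ (c ^ 2 + 1) / α * α ^ l := by
    rintro v hv ⟨y, hy, hyt, hyv, h⟩
    have hl' : (U.erase v).card - 1 = l := by rw [hcard v hv]; rfl
    have hsingle : ∀ z, w y z ≤ c → (∀ b, b ≠ v → b ≠ z → w y b ≤ 0) →
        P v ≤ (c ^ 2 + 1) / α * α ^ l := by
      intro z hz hb
      rw [← hl']
      exact pathSum_le_of_single_row (q := c) (g := z) (ih' v hv) hc hα1 (hc.trans hDc) hDc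
        (by linarith) (by nlinarith) hw hrow (by simp) (by rwa [hins v hv]) hyt
        (fun b hbU _ hbz => hb b (Finset.ne_of_mem_erase hbU) hbz) hz
    rcases h with rfl | rfl
    · exact hsingle (g y) ((hlight y (hmem y hy) hyt).trans hc) (hzero y (hmem y hy) hyt)
    · exact hsingle (f y) (hheavy y (hmem y hy) hyt)
        fun b h1 h2 => hzero y (hmem y hy) hyt b h2 h1
  have hlightP : ∀ v ∈ U, (∃ y ∈ U, y ≠ t ∧ y ≠ v ∧ (v = f y ∨ c = 1 ∧ v = g y)) →
      P v ≤ (c + 1) / α * α ^ l := by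
    rintro v hv ⟨y, hy, hyt, hyv, h⟩
    have hl' : (U.erase v).card - 1 = l := by rw [hcard v hv]; rfl
    have hsingle : ∀ z, w y z ≤ 1 → (∀ b, b ≠ v → b ≠ z → w y b ≤ 0) →
        P v ≤ (c + 1) / α * α ^ l := by
      intro z hz hb
      rw [← hl']
      exact pathSum_le_of_single_row (q := 1) (g := z) (ih' v hv) hc hα1 hD₁ hD₁
        (by linarith) (by linarith) hw hrow (by simp) (by rwa [hins v hv]) hyt
        (fun b hbU _ hbz => hb b (Finset.ne_of_mem_erase hbU) hbz) hz
    rcases h with rfl | ⟨hc1, rfl⟩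
    · exact hsingle (g y) (hlight y (hmem y hy) hyt) (hzero y (hmem y hy) hyt)
    · exact hsingle (f y) ((hheavy y (hmem y hy) hyt).trans hc1.le)
        fun b h1 h2 => hzero y (hmem y hy) hyt b h2 h1
  have hαm : α * α ^ m = α ^ 2 * α ^ l := by rw [hl]; ring
  have hPa := hP _ haU
  have hPb := hP _ hbU
  have hαm' : α ^ m = α * α ^ l := by rw [hl]; ring
  by_cases hA : ∃ y ∈ U, y ≠ t ∧ y ≠ f x ∧ (f x = f y ∨ f x = g y)
  swap
  · have h1 : P (g x) ≤ α ^ l := by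
      refine hdead (f x) haU (g x) hbU hab fun y hy hyt hyv => ?_
      by_contra! h
      exact hA ⟨y, hy, hyt, hyv, by tauto⟩
    have h2 := mul_le_mul_of_nonneg_left hPa (show 0 ≤ c by linarith)
    rw [hαm, hα]
    rw [hαm'] at h2
    change c * P (f x) ≤ _ at h2
    linarith
  by_cases hB : ∃ y ∈ U, y ≠ t ∧ y ≠ g x ∧ (g x = f y ∨ g x = g y)
  swap
  · have h1 : P (f x) ≤ α ^ l := by
      refine hdead (g x) hbU (f x) haU hab.symm fun y hy hyt hyv => ?_
      by_contra! h
      exact hB ⟨y, hy, hyt, hyv, by tauto⟩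
    have h2 := mul_le_mul_of_nonneg_left h1 (show 0 ≤ c by linarith)
    have h3 : (c + α) * α ^ l ≤ (c * α + 1) * α ^ l :=
      mul_le_mul_of_nonneg_right (by nlinarith) hpl.le
    rw [hαm, hα]
    rw [hαm'] at hPb
    change P (g x) ≤ _ at hPb
    linarith
  have hlast : (∃ y ∈ U, y ≠ t ∧ y ≠ g x ∧ (g x = f y ∨ c = 1 ∧ g x = g y)) →
      pathSum w t U x ≤ α * α ^ m := by
    intro h
    have h1 := mul_le_mul_of_nonneg_left (hheavyP _ haU hA) (show 0 ≤ c by linarith)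
    have h2 := hlightP _ hbU h
    have h3 : c * ((c ^ 2 + 1) / α) + (c + 1) / α ≤ α ^ 2 := by
      rw [← mul_div_assoc, ← add_div, div_le_iff₀ hα0, hα]
      have : (c * α + 1) * α = c * α ^ 2 + α := by ring
      rw [this, hα]
      nlinarith
    rw [hαm]
    have h4 := mul_le_mul_of_nonneg_right h3 hpl.le
    linarith
  rcases hc₂ with hc1 | hc₂
  · obtain ⟨y, hy, hyt, hyb, h⟩ := hB
    exact hlast ⟨y, hy, hyt, hyb, h.imp_right fun h => ⟨hc1, h⟩⟩
  by_cases hesc : ∃ r ∈ insert x U, r ≠ t ∧ (f r ∉ U ∨ f r = r)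
  · exact hescape hesc
  by_cases hcol : ∃ x₁ ∈ insert x U, x₁ ≠ t ∧ ∃ x₂ ∈ insert x U, x₂ ≠ t ∧ x₁ ≠ x₂ ∧ f x₁ = f x₂
  · exact hcollide hc₂ hcol
  push Not at hesc hcol
  have himg : ((insert x U).erase t).image f = U := by
    refine Finset.eq_of_subset_of_card_le ?_ ?_
    · intro v hv
      obtain ⟨r, hr, rfl⟩ := Finset.mem_image.1 hv
      exact (hesc r (Finset.mem_of_mem_erase hr) (Finset.ne_of_mem_erase hr)).1
    · rw [Finset.card_image_of_injOn]
      · have := Finset.pred_card_le_card_erase (s := insert x U) (a := t)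
        rw [Finset.card_insert_of_notMem hxU] at this
        simpa using this
      · intro a ha b hb h
        by_contra hne'
        have ha := Finset.mem_erase.1 (Finset.mem_coe.1 ha)
        have hb := Finset.mem_erase.1 (Finset.mem_coe.1 hb)
        exact hcol a ha.2 ha.1 b hb.2 hb.1 hne' h
  obtain ⟨z, hz, hfz⟩ := Finset.mem_image.1 (himg.symm ▸ hbU)
  obtain ⟨hzt, hz⟩ := Finset.mem_erase.1 hz
  have hzx : z ≠ x := by rintro rfl; exact hab hfz
  refine hlast ⟨z, (Finset.mem_insert.1 hz).resolve_left hzx, hzt, ?_, Or.inl hfz.symm⟩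
  rintro rfl
  exact (hesc _ hz hzt).2 hfz

theorem exists_sum_mul_le_of_le [Fintype V] [Nontrivial V] {c : ℝ} {r B : V → ℝ}
    (hB : ∀ v, 0 ≤ B v) (hr : ∀ v, 0 ≤ r v) (hrc : ∀ v, r v ≤ c) (hsum : ∑ v, r v ≤ c + 1) :
    ∃ f g, f ≠ g ∧ ∑ v, r v * B v ≤ c * B f + B g := by
  obtain ⟨f, -, hf⟩ := Finset.exists_max_image Finset.univ B Finset.univ_nonempty
  obtain ⟨g₀, hg₀⟩ := exists_ne f
  obtain ⟨g, hg, hg'⟩ := Finset.exists_max_image (Finset.univ.erase f) B ⟨g₀, by simp [hg₀]⟩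
  have hfm := Finset.mem_univ f
  refine ⟨f, g, (Finset.ne_of_mem_erase hg).symm, ?_⟩
  rw [← Finset.add_sum_erase _ _ hfm] at hsum ⊢
  have h1 : ∑ v ∈ Finset.univ.erase f, r v * B v ≤ (∑ v ∈ Finset.univ.erase f, r v) * B g := by
    rw [Finset.sum_mul]
    exact Finset.sum_le_sum fun v hv => mul_le_mul_of_nonneg_left (hg' v hv) (hr v)
  have h2 := mul_le_mul_of_nonneg_right hsum (hB g)
  have h3 := mul_nonneg (sub_nonneg.2 (hrc f)) (sub_nonneg.2 (hf g (Finset.mem_univ g)))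
  nlinarith

/-- The weight of simple paths when every entry is at most `c` and every row sums to at most
`c + 1`. -/
theorem pathSum_le_pow [Fintype V] [Nontrivial V] {c α : ℝ} (hc : 1 ≤ c) (hc₂ : c = 1 ∨ 2 ≤ c)
    (hcα : c ≤ α) (hα : α ^ 2 = c * α + 1) (hw : ∀ a b, 0 ≤ w a b) (hwc : ∀ a b, w a b ≤ c)
    (hsum : ∀ a, ∑ b, w a b ≤ c + 1) (hxU : x ∉ U) : pathSum w t U x ≤ α ^ U.card := by
  have key : ∀ (S : Finset V) (w : V → V → ℝ), (∀ a b, 0 ≤ w a b) →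
      (∀ a ∉ S, IsExtremalRow c α (w a)) → (∀ a ∈ S, ∀ b, w a b ≤ c) →
      (∀ a ∈ S, ∑ b, w a b ≤ c + 1) → pathSum w t U x ≤ α ^ U.card := by
    intro S
    induction S using Finset.induction_on with
    | empty =>
      intro w hw hrow _ _
      exact pathSum_le_pow_of_extremal hc hc₂ hcα hα hw (fun a => hrow a (by simp)) hxU
    | insert y S hy ih =>
      intro w hw hrow hwc hsum
      obtain ⟨A, B, hB, h⟩ := exists_pathSum_update_eq hw t y x U hxU
      have hyS := Finset.mem_insert_self y S
      obtain ⟨f, g, hfg, hle⟩ := exists_sum_mul_le_of_le hB (hw y) (hwc y hyS) (hsum y hyS)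
      have h0 := h (w y)
      rw [Function.update_eq_self] at h0
      have h1 := h fun v => (if v = f then c else 0) + if v = g then 1 else 0
      simp only [add_mul, ite_mul, zero_mul, one_mul, Finset.sum_add_distrib, Finset.sum_ite_eq',
        Finset.mem_univ, if_true] at h1
      have h2 : pathSum w t U x ≤ pathSum (Function.update w y fun v =>
          (if v = f then c else 0) + if v = g then 1 else 0) t U x := by
        rw [h0, h1]; linarith
      refine h2.trans (ih _ ?_ ?_ ?_ ?_)
      · intro a b
        by_cases ha : a = y
        · subst ha; rw [Function.update_self]; positivity
        · rw [Function.update_of_ne ha]; exact hw a b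
      · intro a haS
        by_cases ha : a = y
        · subst ha; rw [Function.update_self]; exact Or.inl ⟨f, g, hfg, fun v => le_rfl⟩
        · rw [Function.update_of_ne ha]; exact hrow a (by simp [ha, haS])
      · intro a haS b
        rw [Function.update_of_ne (by rintro rfl; exact hy haS)]
        exact hwc a (Finset.mem_insert_of_mem haS) b
      · intro a haS
        rw [Function.update_of_ne (by rintro rfl; exact hy haS)]
        exact hsum a (Finset.mem_insert_of_mem haS)
  exact key Finset.univ w hw (fun a ha => absurd (Finset.mem_univ a) ha) (fun a _ => hwc a)
    fun a _ => hsum a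

/-- `IsTraceFrom x S f` says that the set `S` can be listed by starting at `x` and repeatedly
applying `f`, and that `f` is the identity outside of `S`. -/
inductive IsTraceFrom : V → Finset V → (V → V) → Prop
  | single (x : V) (f : V → V) (h : ∀ v, v ≠ x → f v = v) : IsTraceFrom x {x} f
  | cons (x : V) (S : Finset V) (f : V → V) (hx : x ∉ S)
      (h : IsTraceFrom (f x) S (Function.update f x x)) : IsTraceFrom x (insert x S) f

theorem IsTraceFrom.mem {S : Finset V} {f : V → V} (h : IsTraceFrom x S f) : x ∈ S := by
  cases h <;> simp

theorem IsTraceFrom.eq_singleton_or {S : Finset V} {f : V → V} (h : IsTraceFrom x S f) :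
    (S = {x} ∧ ∀ v, v ≠ x → f v = v) ∨
      ∃ S', S = insert x S' ∧ x ∉ S' ∧ IsTraceFrom (f x) S' (Function.update f x x) := by
  cases h with
  | single _ _ h => exact Or.inl ⟨rfl, h⟩
  | cons _ S' _ hx h => exact Or.inr ⟨S', rfl, hx, h⟩

theorem isTraceFrom_of_forall_eq {S : Finset V} {f : V → V} (hx : x ∈ S)
    (hf : ∀ v, v ∉ S → f v = v)
    (h : ∀ T ⊆ S, x ∈ T → (∀ v ∈ T, f v ∈ S → f v ∈ T) → T = S) : IsTraceFrom x S f := by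
  induction S using Finset.strongInduction generalizing x f with
  | H S ih =>
    by_cases hy : f x ∈ S.erase x
    · rw [← Finset.insert_erase hx]
      refine .cons _ _ _ (by simp) (ih _ (Finset.erase_ssubset hx) hy ?_ ?_)
      · intro v hv
        by_cases hvx : v = x
        · subst hvx; rw [Function.update_self]
        · rw [Function.update_of_ne hvx]
          exact hf v fun hvS => hv (Finset.mem_erase.2 ⟨hvx, hvS⟩)
      · intro T hT hyT hcl
        have hxT : x ∉ T := fun hxT => by simpa using hT hxT
        have := h (insert x T)
          (Finset.insert_subset hx (hT.trans (Finset.erase_subset _ _))) (by simp) ?_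
        · rw [← this, Finset.erase_insert hxT]
        · intro v hv hfv
          by_cases hvx : v = x
          · subst hvx; exact Finset.mem_insert_of_mem hyT
          · have hvT := (Finset.mem_insert.1 hv).resolve_left hvx
            by_cases hfx : f v = x
            · rw [hfx]; exact Finset.mem_insert_self _ _
            · have := hcl v hvT
              rw [Function.update_of_ne hvx] at this
              exact Finset.mem_insert_of_mem (this (Finset.mem_erase.2 ⟨hfx, hfv⟩))
    · have hS := h {x} (by simpa using hx) (by simp) ?_
      · subst hS
        exact .single x f fun v hv => hf v (by simpa using hv)
      · intro v hv hfv
        rw [Finset.mem_singleton.1 hv] at hfv ⊢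
        by_contra hne
        exact hy (Finset.mem_erase.2 ⟨by simpa using hne, hfv⟩)

/-- A connected functional digraph with at most one source is traced from some vertex. -/
theorem exists_isTraceFrom {S : Finset V} {f : V → V} (hS : S.Nonempty)
    (hf : ∀ v, v ∉ S → f v = v) (hmaps : ∀ v ∈ S, f v ∈ S)
    (hconn : ∀ u ∈ S, ∀ v ∈ S,
      Relation.ReflTransGen (fun a b => (a ∈ S ∧ f a = b) ∨ (b ∈ S ∧ f b = a)) u v)
    (hsrc : ∀ u ∈ S, ∀ v ∈ S, (∀ a ∈ S, f a ≠ u) → (∀ a ∈ S, f a ≠ v) → u = v) :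
    ∃ x, IsTraceFrom x S f := by
  obtain ⟨x, hx, hsx⟩ : ∃ x ∈ S, ∀ v ∈ S, v ≠ x → ∃ a ∈ S, f a = v := by
    by_cases h : ∃ x ∈ S, ∀ a ∈ S, f a ≠ x
    · obtain ⟨x, hx, h⟩ := h
      refine ⟨x, hx, fun v hv hvx => ?_⟩
      by_contra! h'
      exact hvx (hsrc v hv x hx h' h)
    · push Not at h
      obtain ⟨x, hx⟩ := hS
      exact ⟨x, hx, fun v hv _ => h v hv⟩
  refine ⟨x, isTraceFrom_of_forall_eq hx hf fun T hT hxT hcl => ?_⟩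
  have himg : S \ T = (S \ T).image f := by
    refine Finset.eq_of_subset_of_card_le (fun v hv => ?_) Finset.card_image_le
    obtain ⟨hvS, hvT⟩ := Finset.mem_sdiff.1 hv
    obtain ⟨a, ha, rfl⟩ := hsx v hvS (by rintro rfl; exact hvT hxT)
    exact Finset.mem_image_of_mem f (Finset.mem_sdiff.2 ⟨ha, fun haT => hvT (hcl a haT hvS)⟩)
  have hreach : ∀ v, Relation.ReflTransGen
      (fun a b => (a ∈ S ∧ f a = b) ∨ (b ∈ S ∧ f b = a)) x v → v ∈ T := by
    intro v h
    induction h with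
    | refl => exact hxT
    | @tail a b _ h ih =>
      rcases h with ⟨haS, rfl⟩ | ⟨hbS, rfl⟩
      · exact hcl _ ih (hmaps _ haS)
      · by_contra hbT
        have := Finset.mem_image_of_mem f (Finset.mem_sdiff.2 ⟨hbS, hbT⟩)
        rw [← himg] at this
        exact (Finset.mem_sdiff.1 this).2 ih
  exact Finset.Subset.antisymm hT fun v hv => hreach v (hconn x hx v hv)

theorem sum_le_sum_of_forall_exists {ι κ : Type*} {s : Finset ι} {I : Finset κ} (φ : κ → ι)
    (hφ : ∀ p ∈ s, ∃ i ∈ I, φ i = p) (F : ι → ℝ) (hF : ∀ p, 0 ≤ F p) :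
    ∑ p ∈ s, F p ≤ ∑ i ∈ I, F (φ i) := by
  choose j hj hφj using hφ
  calc ∑ p ∈ s, F p = ∑ i ∈ s.attach.image fun p => j p.1 p.2, F (φ i) := by
        rw [Finset.sum_image fun p _ q _ h =>
          Subtype.ext (by rw [← hφj p.1 p.2, h, hφj q.1 q.2]), ← Finset.sum_attach]
        exact Finset.sum_congr rfl fun p _ => by rw [hφj]
    _ ≤ _ := by
        refine Finset.sum_le_sum_of_subset_of_nonneg (fun i hi => ?_) fun i _ _ => hF _
        obtain ⟨p, -, rfl⟩ := Finset.mem_image.1 hi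
        exact hj p.1 p.2

/-- Traces are dominated by simple paths followed by one more edge. -/
theorem sum_isTraceFrom_le [Fintype V] {k : ℝ} (hw : ∀ a b, 0 ≤ w a b)
    (hk : ∀ a, ∑ b, w a b ≤ k) (hxU : x ∉ U) :
    ∑ p ∈ Finset.univ.filter (fun p : Finset V × (V → V) =>
      p.1 ⊆ insert x U ∧ IsTraceFrom x p.1 p.2), ∏ v ∈ p.1, w v (p.2 v) ≤
      k * ∑ t ∈ insert x U, pathSum w t U x := by
  induction U using Finset.strongInduction generalizing x with
  | H U ih =>
    set F : Finset V × (V → V) → ℝ := fun p => ∏ v ∈ p.1, w v (p.2 v) with hF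
    set A : V → Finset V → Finset (Finset V × (V → V)) := fun x U =>
      Finset.univ.filter fun p => p.1 ⊆ insert x U ∧ IsTraceFrom x p.1 p.2 with hA
    have hF0 : ∀ p, 0 ≤ F p := fun p => Finset.prod_nonneg fun v _ => hw _ _
    set φ : V ⊕ (Σ _ : V, Finset V × (V → V)) → Finset V × (V → V) :=
      Sum.elim (fun z => ({x}, Function.update id x z))
        (fun q => (insert x q.2.1, Function.update q.2.2 x q.1)) with hφ
    have hcover : ∀ p ∈ A x U,
        ∃ i ∈ Finset.univ.disjSum (U.sigma fun y => A y (U.erase y)), φ i = p := by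
      rintro ⟨S, f⟩ hp
      obtain ⟨hS, htr⟩ := (Finset.mem_filter.1 hp).2
      change S ⊆ insert x U at hS
      change IsTraceFrom x S f at htr
      rcases htr.eq_singleton_or with ⟨hSx, h⟩ | ⟨S, rfl, hxS, h⟩
      · subst hSx
        refine ⟨Sum.inl (f x), by simp, ?_⟩
        simp only [hφ, Sum.elim_inl, Prod.mk.injEq, true_and]
        funext v
        by_cases hv : v = x
        · subst hv; simp
        · rw [Function.update_of_ne hv, id, h v hv]
      · have hSU : S ⊆ U := fun v hv =>
          (Finset.mem_insert.1 (hS (Finset.mem_insert_of_mem hv))).resolve_left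
            (by rintro rfl; exact hxS hv)
        have hfU : f x ∈ U := hSU h.mem
        refine ⟨Sum.inr ⟨f x, S, Function.update f x x⟩, ?_, by simp [hφ]⟩
        rw [Finset.inr_mem_disjSum, Finset.mem_sigma]
        exact ⟨hfU, Finset.mem_filter.2 ⟨Finset.mem_univ _, by
          rwa [Finset.insert_erase hfU], h⟩⟩
    have h1 := sum_le_sum_of_forall_exists φ hcover F hF0
    rw [Finset.sum_disjSum, Finset.sum_sigma] at h1
    have h2 : ∑ z, F (φ (Sum.inl z)) ≤ k := by
      refine le_trans (le_of_eq (Finset.sum_congr rfl fun z _ => ?_)) (hk x)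
      simp [hφ, hF]
    have h3 : ∀ y ∈ U, ∑ p ∈ A y (U.erase y), F (φ (Sum.inr ⟨y, p⟩)) ≤
        w x y * (k * ∑ t ∈ U, pathSum w t (U.erase y) y) := by
      intro y hy
      have := ih _ (Finset.erase_ssubset hy) (x := y) (by simp)
      rw [Finset.insert_erase hy] at this
      refine le_trans (le_of_eq ?_) (mul_le_mul_of_nonneg_left this (hw x y))
      rw [Finset.mul_sum]
      refine Finset.sum_congr (by simp only [hA, Finset.insert_erase hy]) fun p hp => ?_
      have hpU := (Finset.mem_filter.1 hp).2.1
      have hxp : x ∉ p.1 := fun h => hxU (hpU h)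
      simp only [hφ, hF, Sum.elim_inr]
      rw [Finset.prod_insert hxp, Function.update_self]
      congr 1
      refine Finset.prod_congr rfl fun v hv => ?_
      rw [Function.update_of_ne (by rintro rfl; exact hxp hv)]
    have h4 : k * ∑ t ∈ insert x U, pathSum w t U x =
        k + ∑ y ∈ U, w x y * (k * ∑ t ∈ U, pathSum w t (U.erase y) y) := by
      rw [Finset.sum_insert hxU, pathSum_self, mul_add, mul_one]
      congr 1
      rw [Finset.sum_congr rfl fun t ht => pathSum_of_ne (w := w) (U := U) (x := x) (t := t)
        (by rintro rfl; exact hxU ht), Finset.sum_comm, Finset.mul_sum]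
      refine Finset.sum_congr rfl fun y _ => ?_
      rw [← Finset.mul_sum]; ring
    rw [h4]
    exact h1.trans (add_le_add h2 (Finset.sum_le_sum h3))

/-- The number of path-cycles is at most the total weight of traces over all starting vertices. -/
theorem pathCycleCount_le_sum_isTraceFrom [Fintype V] (G : V → V → ℕ) :
    (pathCycleCount G : ℝ) ≤ ∑ x : V, ∑ p ∈ Finset.univ.filter (fun p : Finset V × (V → V) =>
      p.1 ⊆ insert x (Finset.univ.erase x) ∧ IsTraceFrom x p.1 p.2),
        ∏ v ∈ p.1, (G v (p.2 v) : ℝ) := by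
  rw [pathCycleCount, ← Finset.sum_product', ← Finset.sum_filter]
  push_cast
  rw [Finset.sum_sigma']
  refine sum_le_sum_of_forall_exists (κ := Σ _ : V, Finset V × (V → V)) (fun q => q.2) ?_
    (fun p => ∏ v ∈ p.1, (G v (p.2 v) : ℝ)) fun p => by positivity
  rintro ⟨S, f⟩ hp
  obtain ⟨hS, hf, hmaps, hconn, hcard⟩ := (Finset.mem_filter.1 hp).2
  obtain ⟨x, hx⟩ := exists_isTraceFrom hS hf hmaps hconn fun u hu v hv hu' hv' =>
    Finset.card_le_one.1 hcard u (Finset.mem_filter.2 ⟨hu, hu'⟩) v (Finset.mem_filter.2 ⟨hv, hv'⟩)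
  refine ⟨⟨x, S, f⟩, ?_, rfl⟩
  rw [Finset.mem_sigma, Finset.mem_filter]
  refine ⟨Finset.mem_univ x, Finset.mem_univ _, ?_, hx⟩
  rw [Finset.insert_erase (Finset.mem_univ x)]
  exact Finset.subset_univ _

end PathSum

theorem alphaK_sq (k : ℕ) : alphaK k ^ 2 = ((k : ℝ) - 1) * alphaK k + 1 := by
  have := Real.sq_sqrt (show (0 : ℝ) ≤ ((k : ℝ) - 1) ^ 2 + 4 by positivity)
  rw [alphaK]
  linarith

theorem sub_one_le_alphaK (k : ℕ) : (k : ℝ) - 1 ≤ alphaK k := by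
  have : (k : ℝ) - 1 ≤ √(((k : ℝ) - 1) ^ 2 + 4) := Real.le_sqrt_of_sq_le (by linarith)
  rw [alphaK]
  linarith

theorem pathSum_erase_le_alphaK_pow {n k : ℕ} (hk : 2 ≤ k) {w : Fin n → Fin n → ℝ}
    (hw : ∀ a b, 0 ≤ w a b) (hwk : ∀ a b, w a b ≤ (k : ℝ) - 1) (hsum : ∀ a, ∑ b, w a b ≤ k)
    (t x : Fin n) : pathSum w t (Finset.univ.erase x) x ≤ alphaK k ^ (n - 1) := by
  have hcard : (Finset.univ.erase x).card = n - 1 := by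
    rw [Finset.card_erase_of_mem (Finset.mem_univ x), Finset.card_univ, Fintype.card_fin]
  have hk' : (2 : ℝ) ≤ k := by exact_mod_cast hk
  rcases subsingleton_or_nontrivial (Fin n) with h | h
  · have h0 : n - 1 = 0 := by
      have := Fin.subsingleton_iff_le_one.1 h
      omega
    rw [Subsingleton.elim x t, pathSum_self, h0, pow_zero]
  · rw [← hcard]
    refine pathSum_le_pow (c := (k : ℝ) - 1) (by linarith) ?_ (sub_one_le_alphaK k) (alphaK_sq k)
      hw hwk (fun a => by linarith [hsum a]) (by simp)
    rcases hk.eq_or_lt with rfl | h3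
    · left; norm_num
    · right
      have : (3 : ℝ) ≤ k := by exact_mod_cast h3
      linarith

theorem stmt_9 (n k : ℕ) (hn : 1 ≤ n) (hk : 2 ≤ k) (G : Fin n → Fin n → ℕ)
    (hdeg : ∀ v : Fin n, (∑ u, G v u) = k) :
    (pathCycleCount (fun u v : Fin n => if G u v = k then 1 else G u v) : ℝ) ≤
      5 * (n : ℝ) ^ 2 * (k : ℝ) * alphaK k ^ (n - 1) := by
  set H : Fin n → Fin n → ℕ := fun u v => if G u v = k then 1 else G u v with hH
  have hle : ∀ u v, H u v ≤ G u v ∧ H u v + 1 ≤ k := by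
    intro u v
    have := Finset.single_le_sum (f := G u) (fun _ _ => Nat.zero_le _) (Finset.mem_univ v)
    rw [hdeg] at this
    simp only [hH]
    split_ifs <;> omega
  set w : Fin n → Fin n → ℝ := fun u v => H u v with hwdef
  have hw : ∀ a b, 0 ≤ w a b := fun a b => Nat.cast_nonneg _
  have hwk : ∀ a b, w a b ≤ (k : ℝ) - 1 := by
    intro a b
    have : ((H a b : ℕ) : ℝ) + 1 ≤ k := by exact_mod_cast (hle a b).2
    simp only [hwdef]
    linarith
  have hsum : ∀ a, ∑ b, w a b ≤ k := by
    intro a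
    have : ∑ b, H a b ≤ k := (Finset.sum_le_sum fun b _ => (hle a b).1).trans (hdeg a).le
    simp only [hwdef]
    exact_mod_cast this
  have hpow : 0 ≤ (n : ℝ) ^ 2 * k * alphaK k ^ (n - 1) := by
    have : (1 : ℝ) ≤ k := by exact_mod_cast (by omega : 1 ≤ k)
    have := pow_nonneg (show 0 ≤ alphaK k by linarith [sub_one_le_alphaK k]) (n - 1)
    positivity
  calc (pathCycleCount H : ℝ) ≤ ∑ x : Fin n, k * ∑ t ∈ insert x (Finset.univ.erase x),
        pathSum w t (Finset.univ.erase x) x :=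
        (pathCycleCount_le_sum_isTraceFrom H).trans
          (Finset.sum_le_sum fun x _ => sum_isTraceFrom_le hw hsum (by simp))
    _ ≤ ∑ x : Fin n, k * ∑ t : Fin n, alphaK k ^ (n - 1) := by
        gcongr with x _
        rw [Finset.insert_erase (Finset.mem_univ x)]
        exact Finset.sum_le_sum fun t _ => pathSum_erase_le_alphaK_pow hk hw hwk hsum t x
    _ = (n : ℝ) ^ 2 * k * alphaK k ^ (n - 1) := by
        simp only [Finset.sum_const, Finset.card_univ, Fintype.card_fin, nsmul_eq_mul]
        ring
    _ ≤ _ := by linarith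
end

section
/- Let M be an n-state, k-action DMDP and let π_1 ≺ π_2 ≺ … ≺ π_ℓ be a sequence of policies in which each π_{i+1} is obtained from π_i by policy improvement with arbitrary action selection. Then ℓ ≤ k·n·N_1(G_M), where N_1(G_M) is the number of path-cycle subgraphs of the digraph obtained from the DMDP digraph G_M by replacing each multi-edge of multiplicity k by a single edge. -/
open scoped Classical
open Finset

namespace DMDP

variable {S A : Type*} (M : DMDP S A)

lemma traj_succ (π : S → A) (v : S) (t : ℕ) :
    M.traj π v (t + 1) = M.T (M.traj π v t) (π (M.traj π v t)) :=
  Function.iterate_succ_apply' _ _ _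

/-- The Bellman equation for the value of a policy. -/
lemma V_eq_Q [Finite S] (π : S → A) (v : S) : M.V π v = M.Q π v (π v) := by
  have hsum : ∀ g : ℕ → S, Summable fun t => M.gamma ^ t * M.R (g t) (π (g t)) := by
    intro g
    obtain ⟨C, hC⟩ := (Set.finite_range fun x => |M.R x (π x)|).bddAbove
    refine Summable.of_norm_bounded
      ((summable_geometric_of_lt_one M.gamma_nonneg M.gamma_lt_one).mul_right C) fun t => ?_
    rw [norm_mul, norm_pow, Real.norm_of_nonneg M.gamma_nonneg, Real.norm_eq_abs]
    exact mul_le_mul_of_nonneg_left (hC ⟨g t, rfl⟩) (pow_nonneg M.gamma_nonneg t)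
  rw [V, (hsum _).tsum_eq_zero_add, Q, V, ← tsum_mul_left]
  simp only [pow_succ', mul_assoc, pow_zero, one_mul]
  rfl

/-- The value of a policy only depends on its actions on an invariant set of states. -/
lemma V_congr {π π' : S → A} {s : Set S} (h : ∀ x ∈ s, π x = π' x)
    (hs : ∀ x ∈ s, M.T x (π x) ∈ s) {v : S} (hv : v ∈ s) : M.V π v = M.V π' v := by
  have key : ∀ t, M.traj π v t ∈ s ∧ M.traj π v t = M.traj π' v t := by
    intro t
    induction t with
    | zero => exact ⟨hv, rfl⟩
    | succ t ih =>
      rw [traj_succ, traj_succ, ← ih.2, ← h _ ih.1]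
      exact ⟨hs _ ih.1, rfl⟩
  refine tsum_congr fun t => ?_
  rw [← (key t).2, h _ (key t).1]

/-- The states visited by `π` from `v`. -/
noncomputable def reach [Fintype S] (π : S → A) (v : S) : Finset S :=
  univ.filter fun x => ∃ t, M.traj π v t = x

/-- The successor map of `π` on the states visited from `v`, extended by the identity. -/
noncomputable def reachSucc [Fintype S] (π : S → A) (v x : S) : S :=
  if x ∈ M.reach π v then M.T x (π x) else x

lemma mem_reach [Fintype S] {π : S → A} {v x : S} :
    x ∈ M.reach π v ↔ ∃ t, M.traj π v t = x := by
  simp [reach]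

lemma self_mem_reach [Fintype S] (π : S → A) (v : S) : v ∈ M.reach π v :=
  M.mem_reach.2 ⟨0, rfl⟩

lemma step_mem_reach [Fintype S] {π : S → A} {v x : S} (hx : x ∈ M.reach π v) :
    M.T x (π x) ∈ M.reach π v := by
  obtain ⟨t, rfl⟩ := M.mem_reach.1 hx
  exact M.mem_reach.2 ⟨t + 1, M.traj_succ π v t⟩

/-- The conditions under which `pathCycleCount` counts the pair `(s, f)`. -/
def IsPathCycle {S : Type*} (s : Finset S) (f : S → S) : Prop :=
  s.Nonempty ∧ (∀ v, v ∉ s → f v = v) ∧ (∀ v ∈ s, f v ∈ s) ∧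
    (∀ u ∈ s, ∀ v ∈ s,
      Relation.ReflTransGen (fun a b => (a ∈ s ∧ f a = b) ∨ (b ∈ s ∧ f b = a)) u v) ∧
    ∀ x ∈ s, ∀ y ∈ s, (∀ u ∈ s, f u ≠ x) → (∀ u ∈ s, f u ≠ y) → x = y

lemma isPathCycle_reach [Fintype S] (π : S → A) (v : S) :
    IsPathCycle (M.reach π v) (M.reachSucc π v) := by
  have hmem : ∀ t, M.traj π v t ∈ M.reach π v := fun t => M.mem_reach.2 ⟨t, rfl⟩
  have hsucc : ∀ t, M.reachSucc π v (M.traj π v t) = M.traj π v (t + 1) := fun t => by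
    rw [reachSucc, if_pos (hmem t), traj_succ]
  refine ⟨⟨v, M.self_mem_reach π v⟩, fun x hx => if_neg hx, fun x hx => ?_, ?_, ?_⟩
  · rw [reachSucc, if_pos hx]
    exact M.step_mem_reach hx
  · have hconn : ∀ x ∈ M.reach π v, Relation.ReflTransGen
        (fun a b => (a ∈ M.reach π v ∧ M.reachSucc π v a = b) ∨
          (b ∈ M.reach π v ∧ M.reachSucc π v b = a)) v x := by
      intro x hx
      obtain ⟨t, rfl⟩ := M.mem_reach.1 hx
      induction t with
      | zero => exact .refl
      | succ t ih => exact (ih (hmem t)).tail (.inl ⟨hmem t, hsucc t⟩)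
    have : Std.Symm fun a b => (a ∈ M.reach π v ∧ M.reachSucc π v a = b) ∨
        (b ∈ M.reach π v ∧ M.reachSucc π v b = a) := ⟨fun _ _ h => h.symm⟩
    exact fun x hx y hy => (symm (hconn x hx)).trans (hconn y hy)
  · have hsrc : ∀ x ∈ M.reach π v, (∀ u ∈ M.reach π v, M.reachSucc π v u ≠ x) → x = v := by
      intro x hx hsrc
      obtain ⟨t, rfl⟩ := M.mem_reach.1 hx
      cases t with
      | zero => rfl
      | succ t => exact absurd (hsucc t) (hsrc _ (hmem t))
    exact fun x hx y hy hx' hy' => (hsrc x hx hx').trans (hsrc y hy hy').symm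

/-- If all edges out of `x` go to the same state, a policy improvement that changes the action
at `x` increases the reward. -/
lemma ImpStep.eq_or_reward_lt [Finite S] {M : DMDP S A} {π π' : S → A} (h : M.ImpStep π π')
    {x y : S} (hx : ∀ a, M.T x a = y) : π x = π' x ∨ M.R x (π x) < M.R x (π' x) := by
  by_cases hne : π' x = π x
  · exact .inl hne.symm
  · have := h.2 x hne
    rw [V_eq_Q, Q, Q, hx, hx] at this
    exact .inr (by linarith)

lemma eq_or_reward_lt_of_le [Finite S] {M : DMDP S A} {ℓ : ℕ} {π : ℕ → S → A}
    (hstep : ∀ i, i + 1 < ℓ → M.ImpStep (π i) (π (i + 1))) {x y : S} (hx : ∀ a, M.T x a = y)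
    {i j : ℕ} (hij : i ≤ j) (hj : j < ℓ) :
    π i x = π j x ∨ M.R x (π i x) < M.R x (π j x) := by
  induction j, hij using Nat.le_induction with
  | base => exact .inl rfl
  | succ j _ ih =>
    rcases ih (by omega), (hstep j hj).eq_or_reward_lt hx with ⟨h₁ | h₁, h₂ | h₂⟩
    · exact .inl (h₁.trans h₂)
    · exact .inr (h₁ ▸ h₂)
    · exact .inr (h₂ ▸ h₁)
    · exact .inr (h₁.trans h₂)

/-- Along a chain of policies, every policy strictly improves on all earlier ones at some
common state. -/
lemma exists_forall_V_lt [Nonempty S] {M : DMDP S A} {ℓ : ℕ} {π : ℕ → S → A}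
    (hchain : ∀ i, i + 1 < ℓ → M.PLt (π i) (π (i + 1))) {i : ℕ} (hi : i < ℓ) :
    ∃ v, ∀ j < i, M.V (π j) v < M.V (π i) v := by
  have hmono : ∀ j i, j ≤ i → i < ℓ → ∀ v, M.V (π j) v ≤ M.V (π i) v := by
    intro j i hji
    induction i, hji using Nat.le_induction with
    | base => exact fun _ _ => le_rfl
    | succ i _ ih => exact fun hi v => (ih (by omega) v).trans ((hchain i hi).1 v)
  cases i with
  | zero => exact ⟨Classical.arbitrary S, fun j hj => absurd hj (Nat.not_lt_zero j)⟩
  | succ i =>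
    obtain ⟨v, hv⟩ := (hchain i hi).2
    exact ⟨v, fun j hj => (hmono j i (by omega) (by omega) v).trans_lt hv⟩

/-- The number of actions at `x` whose reward is smaller than that of `a`. -/
noncomputable def rewardRank [Fintype A] (x : S) (a : A) : ℕ :=
  (univ.filter fun b => M.R x b < M.R x a).card

lemma rewardRank_lt_card [Fintype A] (x : S) (a : A) : M.rewardRank x a < Fintype.card A :=
  card_lt_univ_of_notMem (x := a) (by simp)

lemma rewardRank_lt [Fintype A] {x : S} {a b : A} (h : M.R x a < M.R x b) :
    M.rewardRank x a < M.rewardRank x b := by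
  refine card_lt_card ((ssubset_iff_of_subset fun c hc => ?_).2 ⟨a, by simpa using h, by simp⟩)
  simp only [mem_filter, mem_univ, true_and] at hc ⊢
  exact hc.trans h

lemma digraph_eq_card_iff [Fintype A] {x y : S} :
    M.digraph x y = Fintype.card A ↔ ∀ a, M.T x a = y := by
  simp [digraph, card_eq_iff_eq_univ, filter_eq_self]

/-- Indices of policies following the edges of `f` on `s`, equal at the branching states of `s`
and pairwise distinct on `s`, are bounded by the possible reward ranks at the states of `s`. -/
lemma card_le_of_agree_on_branching [Fintype S] [Fintype A] {ℓ : ℕ} {π : ℕ → S → A}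
    (hstep : ∀ i, i + 1 < ℓ → M.ImpStep (π i) (π (i + 1))) {s : Finset S} (hs : s.Nonempty)
    (f : S → S) (I : Finset ℕ) (hI : ∀ i ∈ I, i < ℓ)
    (hagree : ∀ i ∈ I, ∀ j ∈ I, ∀ x ∈ s,
      M.digraph x (f x) ≠ Fintype.card A → π i x = π j x)
    (hdist : ∀ i ∈ I, ∀ j ∈ I, i < j → ∃ x ∈ s, π i x ≠ π j x) :
    I.card ≤ Fintype.card A * Fintype.card S := by
  let ρ : ℕ → ℕ := fun i => ∑ x ∈ s, M.rewardRank x (π i x)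
  have hlt : ∀ i ∈ I, ∀ j ∈ I, i < j → ρ i < ρ j := by
    intro i hi j hj hij
    have hrank : ∀ x ∈ s, π i x = π j x ∨
        M.rewardRank x (π i x) < M.rewardRank x (π j x) := by
      intro x hx
      by_cases hb : M.digraph x (f x) = Fintype.card A
      · exact (eq_or_reward_lt_of_le hstep (M.digraph_eq_card_iff.1 hb) hij.le (hI j hj)).imp_right
          M.rewardRank_lt
      · exact .inl (hagree i hi j hj x hx hb)
    obtain ⟨x, hx, hne⟩ := hdist i hi j hj hij
    exact sum_lt_sum (fun y hy => (hrank y hy).elim (fun h => (congrArg _ h).le) le_of_lt)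
      ⟨x, hx, (hrank x hx).resolve_left hne⟩
  have hmaps : ∀ i ∈ I, ρ i ∈ range (Fintype.card A * Fintype.card S) := by
    intro i _
    rw [mem_range]
    calc ρ i < ∑ _x ∈ s, Fintype.card A :=
          sum_lt_sum_of_nonempty hs fun x _ => M.rewardRank_lt_card x _
      _ = s.card * Fintype.card A := by simp
      _ ≤ Fintype.card A * Fintype.card S := by
          rw [mul_comm]
          exact Nat.mul_le_mul_left _ (card_le_univ s)
  have hinj : Set.InjOn ρ I :=
    StrictMonoOn.injOn fun i hi j hj hij => hlt i hi j hj hij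
  simpa using card_le_card_of_injOn ρ hmaps hinj

/-- The multiplicity function of `G_M` with edges of full multiplicity merged. -/
noncomputable def mergedDigraph [Fintype A] (x y : S) : ℕ :=
  if M.digraph x y = Fintype.card A then 1 else M.digraph x y

/-- Indices of policies following the edges of `f` on `s` and pairwise distinct on `s` are
bounded by the merged multiplicity of `(s, f)`, up to a factor `k * n`. -/
lemma card_le_mul_prod_mergedDigraph [Fintype S] [Fintype A] [Nonempty A] {ℓ : ℕ}
    {π : ℕ → S → A} (hstep : ∀ i, i + 1 < ℓ → M.ImpStep (π i) (π (i + 1)))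
    {s : Finset S} (hs : s.Nonempty) (f : S → S) (I : Finset ℕ) (hI : ∀ i ∈ I, i < ℓ)
    (hf : ∀ i ∈ I, ∀ x ∈ s, M.T x (π i x) = f x)
    (hdist : ∀ i ∈ I, ∀ j ∈ I, i < j → ∃ x ∈ s, π i x ≠ π j x) :
    I.card ≤ Fintype.card A * Fintype.card S * ∏ x ∈ s, M.mergedDigraph x (f x) := by
  let B : S → Prop := fun x => x ∈ s ∧ M.digraph x (f x) ≠ Fintype.card A
  let a₀ : A := Classical.arbitrary A
  let E : S → Finset A := fun x => if B x then univ.filter fun a => M.T x a = f x else {a₀}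
  let φ : ℕ → S → A := fun i x => if B x then π i x else a₀
  have hmaps : ∀ i ∈ I, φ i ∈ Fintype.piFinset E := by
    intro i hi
    rw [Fintype.mem_piFinset]
    intro x
    by_cases hx : B x
    · simpa [φ, E, hx] using hf i hi x hx.1
    · simp [φ, E, hx]
  have hcard : (Fintype.piFinset E).card = ∏ x ∈ s, M.mergedDigraph x (f x) := by
    rw [Fintype.card_piFinset]
    refine (prod_subset_one_on_sdiff (subset_univ s) (fun x hx => ?_) fun x hx => ?_).symm
    · simp [E, B, (mem_sdiff.1 hx).2]
    · by_cases hb : M.digraph x (f x) = Fintype.card A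
      · simp [E, B, hb, mergedDigraph]
      · simp only [E, B, hx, hb, mergedDigraph, ne_eq, not_false_eq_true, and_self, if_true,
          if_false]
        rfl
  rw [← hcard]
  refine card_le_mul_card_image_of_maps_to hmaps _ fun b _ => ?_
  refine M.card_le_of_agree_on_branching hstep hs f _
    (fun i hi => hI i (mem_filter.1 hi).1) (fun i hi j hj x hx hb => ?_)
    (fun i hi j hj => hdist i (mem_filter.1 hi).1 j (mem_filter.1 hj).1)
  have h := congrFun ((mem_filter.1 hi).2.trans (mem_filter.1 hj).2.symm) x
  have hB : B x := ⟨hx, hb⟩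
  simpa [φ, hB] using h

lemma length_le_mul_pathCycleCount [Fintype S] [Nonempty S] [Fintype A] [Nonempty A] {ℓ : ℕ}
    {π : ℕ → S → A} (hchain : ∀ i, i + 1 < ℓ → M.PLt (π i) (π (i + 1)))
    (hstep : ∀ i, i + 1 < ℓ → M.ImpStep (π i) (π (i + 1))) :
    ℓ ≤ Fintype.card A * Fintype.card S * pathCycleCount M.mergedDigraph := by
  have hex : ∀ i, ∃ v, i < ℓ → ∀ j < i, M.V (π j) v < M.V (π i) v := fun i => by
    by_cases hi : i < ℓ
    · exact (exists_forall_V_lt hchain hi).imp fun _ h _ => h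
    · exact ⟨Classical.arbitrary S, fun h => absurd h hi⟩
  choose v hv using hex
  let key : ℕ → Finset S × (S → S) := fun i => (M.reach (π i) (v i), M.reachSucc (π i) (v i))
  rw [pathCycleCount, ← Fintype.sum_prod_type', mul_sum]
  conv_lhs => rw [← card_range ℓ]
  rw [card_eq_sum_card_fiberwise (f := key) (t := univ) fun _ _ => mem_coe.2 (mem_univ _)]
  refine sum_le_sum fun ⟨s, f⟩ _ => ?_
  have hkey : ∀ i ∈ (range ℓ).filter fun i => key i = (s, f),
      i < ℓ ∧ M.reach (π i) (v i) = s ∧ M.reachSucc (π i) (v i) = f := by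
    intro i hi
    obtain ⟨hi, hk⟩ := mem_filter.1 hi
    exact ⟨mem_range.1 hi, congrArg Prod.fst hk, congrArg Prod.snd hk⟩
  rcases ((range ℓ).filter fun i => key i = (s, f)).eq_empty_or_nonempty with he | ⟨i₀, hi₀⟩
  · rw [he, card_empty]
    exact Nat.zero_le _
  have hpc : IsPathCycle s f := by
    obtain ⟨-, rfl, rfl⟩ := hkey i₀ hi₀
    exact M.isPathCycle_reach _ _
  refine (M.card_le_mul_prod_mergedDigraph hstep hpc.1 f _ (fun i hi => (hkey i hi).1)
    (fun i hi x hx => ?_) fun i hi j hj hij => ?_).trans_eq ?_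
  · obtain ⟨-, rfl, rfl⟩ := hkey i hi
    exact (if_pos hx).symm
  · obtain ⟨hjℓ, rfl, -⟩ := hkey j hj
    by_contra! h
    exact (hv j hjℓ i hij).ne' (M.V_congr (s := M.reach (π j) (v j)) (fun x hx => (h x hx).symm)
      (fun x hx => M.step_mem_reach hx) (M.self_mem_reach (π j) (v j)))
  · rw [if_pos]
    obtain ⟨h₁, h₂, h₃, h₄, h₅⟩ := hpc
    refine ⟨h₁, h₂, h₃, h₄, card_le_one.2 fun x hx y hy => ?_⟩
    simp only [mem_filter] at hx hy
    exact h₅ x hx.1 y hy.1 hx.2 hy.2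

end DMDP

theorem stmt_13 {S A : Type*} [Fintype S] [Nonempty S] [Fintype A] [Nonempty A]
    (M : DMDP S A) (n k : ℕ) (hn : Fintype.card S = n) (hk : Fintype.card A = k)
    (ℓ : ℕ) (π : ℕ → S → A)
    (hchain : ∀ i, i + 1 < ℓ → M.PLt (π i) (π (i + 1)))
    (hstep : ∀ i, i + 1 < ℓ → M.ImpStep (π i) (π (i + 1))) :
    ℓ ≤ k * n *
      pathCycleCount (fun s s' : S =>
        if M.digraph s s' = k then 1 else M.digraph s s') := by
  subst hn hk
  exact M.length_le_mul_pathCycleCount hchain hstep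
end
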